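/- Let R be a ring. The following are equivalent: (1) R has a left Artinian left quotient ring Q = C⁻¹R; (2) the set C̄ is a left denominator set in the associated graded ring gr R, the localization C̄⁻¹ gr R is a left Artinian ring, n is a nilpotent ideal, and C' ⊆ C; (3) the set C̄ is a left denominator set in gr R, the left quotient ring Q(gr R/τ) of the ring gr R/τ is a left Artinian ring, n is a nilpotent ideal, and C' ⊆ C. Moreover, if these equivalent conditions hold then gr Q ≅ Q(gr R/τ) ≅ C̄⁻¹ gr R, where gr Q is the associated graded ring of Q with respect to its prime radical filtration. -/

import Mathlib

open Function

universe u v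

/-- A regular element of a ring: a two-sided non-zero-divisor. -/
def IsRegElem {R : Type*} [Ring R] (c : R) : Prop :=
  (∀ x : R, c * x = 0 → x = 0) ∧ (∀ x : R, x * c = 0 → x = 0)

/-- The set `C` of regular elements of a ring. -/
def regSet (R : Type*) [Ring R] : Set R := {c : R | IsRegElem c}

/-- A (left) ideal is two-sided. -/
def Ideal.IsTwoSidedNC {R : Type*} [Ring R] (I : Ideal R) : Prop :=
  ∀ a ∈ I, ∀ r : R, a * r ∈ I

/-- A prime (two-sided) ideal of a possibly noncommutative ring. -/
def Ideal.IsPrimeNC {R : Type*} [Ring R] (P : Ideal R) : Prop :=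
  P ≠ ⊤ ∧ P.IsTwoSidedNC ∧ ∀ a b : R, (∀ r : R, a * r * b ∈ P) → a ∈ P ∨ b ∈ P

/-- The prime radical `n` of a ring: the intersection of all prime ideals. -/
def primeRadical (R : Type*) [Ring R] : Ideal R := sInf {P : Ideal R | P.IsPrimeNC}

/-- `n` is a nilpotent ideal. -/
def IsNilpotentIdeal {R : Type*} [Ring R] (I : Ideal R) : Prop := ∃ k : ℕ, I ^ (k + 1) = ⊥

/-- `φ : R →+* Q` realizes `Q` as a left quotient ring `C⁻¹R` of `R`:  `R` embeds in `Q`,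
every regular element of `R` becomes invertible in `Q`, and every element of `Q` has the
form `(φ c)⁻¹ * (φ r)` with `c` regular. -/
structure IsLeftQuotRing {R : Type u} {Q : Type v} [Ring R] [Ring Q] (φ : R →+* Q) : Prop where
  inj : Function.Injective φ
  isUnit : ∀ c : R, IsRegElem c → IsUnit (φ c)
  denom : ∀ q : Q, ∃ c r : R, IsRegElem c ∧ φ c * q = φ r

/-- Data of a left quotient ring of `R`. -/
structure LeftQuotData (R : Type u) [Ring R] : Type (u + 1) where
  Q : Type u
  [instQ : Ring Q]
  φ : R →+* Q
  quot : IsLeftQuotRing φ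

attribute [instance] LeftQuotData.instQ

/-- `R` has a left Artinian left quotient ring `Q = C⁻¹R`. -/
def HasArtinianLeftQuot (R : Type u) [Ring R] : Prop :=
  ∃ d : LeftQuotData R, IsArtinianRing d.Q

/-- A subset of a ring is a left annihilator. -/
def IsLeftAnnihilatorSet {R : Type*} [Ring R] (A : Set R) : Prop :=
  ∃ S : Set R, A = {r : R | ∀ s ∈ S, r * s = 0}

/-- The ascending chain condition on left annihilators. -/
def ACCLeftAnnihilators (R : Type*) [Ring R] : Prop :=
  ∀ f : ℕ → Set R, (∀ i, IsLeftAnnihilatorSet (f i)) → (∀ i j, i ≤ j → f i ⊆ f j) →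
    ∃ N, ∀ k, N ≤ k → f k = f N

/-- The module `M` contains no infinite direct sum of nonzero submodules. -/
def NoInfiniteIndepFamily (R : Type*) (M : Type*) [Ring R] [AddCommGroup M] [Module R M] : Prop :=
  ¬ ∃ f : ℕ → Submodule R M, (∀ i, f i ≠ ⊥) ∧ iSupIndep f

/-- A left Goldie ring: ACC on left annihilators and no infinite direct sums of nonzero
left ideals. -/
def IsLeftGoldie (R : Type*) [Ring R] : Prop :=
  ACCLeftAnnihilators R ∧ NoInfiniteIndepFamily R R

/-- The subquotient `n^i/n^{i+1}` of `R` determined by the prime radical `n`. -/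
abbrev grPiece (R : Type*) [Ring R] (i : ℕ) :=
  ↥(primeRadical R ^ i) ⧸
    (Submodule.comap (primeRadical R ^ i : Ideal R).subtype (primeRadical R ^ (i + 1)))

/-- The class of `x ∈ n^i` in `n^i/n^{i+1}`. -/
def grMk {R : Type*} [Ring R] (i : ℕ) (x : R) (hx : x ∈ primeRadical R ^ i) : grPiece R i :=
  Submodule.Quotient.mk ⟨x, hx⟩

/-- The `C̄`-torsion submodule `τ_i` of `n^i/n^{i+1}` (take the span, which coincides with the
set of torsion elements whenever the latter is a submodule, e.g. when `C̄` is a left Ore set);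
here `C̄` is represented through `π : R → R̄` as `{c : R | IsRegElem (π c)}`. -/
def tauSub {R : Type u} {Rbar : Type v} [Ring R] [Ring Rbar] (π : R →+* Rbar) (i : ℕ) :
    Submodule R (grPiece R i) :=
  Submodule.span R {u : grPiece R i | ∃ c : R, IsRegElem (π c) ∧ c • u = 0}

/-- The `C̄`-torsionfree module `f_i = (n^i/n^{i+1})/τ_i`. -/
abbrev fMod {R : Type u} {Rbar : Type v} [Ring R] [Ring Rbar] (π : R →+* Rbar) (i : ℕ) :=
  grPiece R i ⧸ tauSub π i

/-- The class of `x ∈ n^i` in `f_i`. -/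
def fMk {R : Type u} {Rbar : Type v} [Ring R] [Ring Rbar] (π : R →+* Rbar) (i : ℕ) (x : R)
    (hx : x ∈ primeRadical R ^ i) : fMod π i :=
  Submodule.Quotient.mk (grMk i x hx)

/-- The subset `C⁻¹K = {(φ c)⁻¹ (φ a) : c ∈ C, a ∈ K}` of a left quotient ring. -/
def locSet {R : Type u} {Q : Type v} [Ring R] [Ring Q] (φ : R →+* Q) (K : Ideal R) : Set Q :=
  {q : Q | ∃ c a : R, IsRegElem c ∧ a ∈ K ∧ φ c * q = φ a}

/-- A subset of a ring is a left Ore set (multiplicatively closed and satisfying the left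
Ore condition). -/
def IsLeftOreSubset {A : Type*} [Ring A] (S : Set A) : Prop :=
  (1 : A) ∈ S ∧ (∀ s ∈ S, ∀ t ∈ S, s * t ∈ S) ∧
    ∀ s ∈ S, ∀ a : A, ∃ t ∈ S, ∃ b : A, t * a = b * s

/-- A left denominator set. -/
def IsLeftDenominatorSet {A : Type*} [Ring A] (S : Set A) : Prop :=
  IsLeftOreSubset S ∧ ∀ a : A, ∀ s ∈ S, a * s = 0 → ∃ t ∈ S, t * a = 0


/-- `c` is regular modulo the prime radical `n`, i.e. the image of `c` in `R̄ = R/n` is a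
regular element of `R̄`; this is the condition `c ∈ C'`. -/
def RegModN {R : Type*} [Ring R] (c : R) : Prop :=
  (∀ x : R, c * x ∈ primeRadical R → x ∈ primeRadical R) ∧
    (∀ x : R, x * c ∈ primeRadical R → x ∈ primeRadical R)

/-- A model of the associated graded ring `gr R = R̄ ⊕ n/n² ⊕ ⋯` of `R` with respect to the
`n`-adic (prime radical) filtration: a ring `G` together with maps
`emb i : n^i → G`, `x ↦ (x + n^{i+1} : n^i/n^{i+1}) ⊆ gr R`, which are additive, detect
`n^{i+1}`, are multiplicative across degrees, send `1` (degree 0) to `1`, generate `G`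
additively, and have independent (direct-sum) images. -/
structure GradedModel (R : Type u) [Ring R] : Type (u + 1) where
  G : Type u
  [instG : Ring G]
  emb : ℕ → R → G
  add : ∀ (i : ℕ) (x y : R), x ∈ primeRadical R ^ i → y ∈ primeRadical R ^ i →
    emb i (x + y) = emb i x + emb i y
  zero_iff : ∀ (i : ℕ) (x : R), x ∈ primeRadical R ^ i →
    (emb i x = 0 ↔ x ∈ primeRadical R ^ (i + 1))
  mul : ∀ (i j : ℕ) (x y : R), x ∈ primeRadical R ^ i → y ∈ primeRadical R ^ j →
    emb i x * emb j y = emb (i + j) (x * y)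
  one : emb 0 1 = 1
  gen : ∀ g : G, ∃ (N : ℕ) (x : ℕ → R), (∀ i, x i ∈ primeRadical R ^ i) ∧
    g = ∑ i ∈ Finset.range N, emb i (x i)
  indep : ∀ (N : ℕ) (x : ℕ → R), (∀ i, x i ∈ primeRadical R ^ i) →
    ∑ i ∈ Finset.range N, emb i (x i) = 0 → ∀ i < N, emb i (x i) = 0

attribute [instance] GradedModel.instG

/-- The copy of `C̄` inside (degree `0` of) the associated graded ring `gr R`. -/
def gradedRegSet {R : Type u} [Ring R] (d : GradedModel R) : Set d.G :=
  {g : d.G | ∃ c : R, RegModN c ∧ g = d.emb 0 c}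

/-- The `C̄`-torsion ideal `τ = ⊕_{i ≥ 1} τ_i` of `gr R`, as a set. -/
def gradedTorsionSet {R : Type u} [Ring R] (d : GradedModel R) : Set d.G :=
  {g : d.G | ∃ s ∈ gradedRegSet d, s * g = 0}

/-- A model of the left Ore localization `S⁻¹A` of a ring `A` at a (denominator) set `S`. -/
structure OreLocModel {A : Type u} [Ring A] (S : Set A) : Type (u + 1) where
  L : Type u
  [instL : Ring L]
  ψ : A →+* L
  isUnit : ∀ s ∈ S, IsUnit (ψ s)
  ker : ∀ a : A, ψ a = 0 ↔ ∃ s ∈ S, s * a = 0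
  denom : ∀ l : L, ∃ s a, s ∈ S ∧ ψ s * l = ψ a

attribute [instance] OreLocModel.instL

/-- A model of the factor ring `A/T` of a ring `A` by the (two-sided) ideal with underlying
set `T`. -/
structure FactorModel {A : Type u} [Ring A] (T : Set A) : Type (u + 1) where
  H : Type u
  [instH : Ring H]
  ρ : A →+* H
  surj : Function.Surjective ρ
  ker : ∀ a : A, ρ a = 0 ↔ a ∈ T

attribute [instance] FactorModel.instH

section Prime

variable {A : Type*} [Ring A]

instance primeRadical_isTwoSided : (primeRadical A).IsTwoSided :=
  ⟨fun b ha ↦ Ideal.mem_sInf.2 fun {_} hP ↦ hP.2.1 _ (Ideal.mem_sInf.1 ha hP) b⟩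

theorem mul_mem_primeRadical_pow {i j : ℕ} {x y : A} (hx : x ∈ primeRadical A ^ i)
    (hy : y ∈ primeRadical A ^ j) : x * y ∈ primeRadical A ^ (i + j) := by
  rw [Ideal.IsTwoSided.pow_add]
  exact Ideal.mul_mem_mul hx hy

theorem mem_primeRadical_pow_zero (x : A) : x ∈ primeRadical A ^ 0 := by
  rw [Submodule.pow_zero, Ideal.one_eq_top]
  trivial

theorem Ideal.IsPrimeNC.le_of_pow_le {I P : Ideal A} (hP : P.IsPrimeNC) {k : ℕ}
    (h : I ^ k ≤ P) : I ≤ P := by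
  induction k with
  | zero =>
    rw [Submodule.pow_zero, Ideal.one_eq_top, top_le_iff] at h
    exact absurd h hP.1
  | succ k ih =>
    by_contra hI
    obtain ⟨b, hb, hbP⟩ := SetLike.not_le_iff_exists.1 hI
    refine hI (ih fun a ha ↦ (hP.2.2 a b fun r ↦ h ?_).resolve_right hbP)
    rw [Submodule.pow_succ, mul_assoc]
    exact Ideal.mul_mem_mul ha (I.mul_mem_left r hb)

theorem le_primeRadical_of_pow_eq_bot {I : Ideal A} {k : ℕ} (h : I ^ k = ⊥) :
    I ≤ primeRadical A :=
  le_sInf fun _ hP ↦ Ideal.IsPrimeNC.le_of_pow_le hP (h.trans_le bot_le)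

/-- The annihilator of the simple module `A ⧸ M` is a prime ideal. -/
theorem exists_isPrimeNC_le_of_isMaximal {M : Ideal A} (hM : M.IsMaximal) :
    ∃ P : Ideal A, P.IsPrimeNC ∧ P ≤ M := by
  let P : Ideal A :=
    { carrier := {r | ∀ x, r * x ∈ M}
      add_mem' := fun ha hb x ↦ by rw [add_mul]; exact M.add_mem (ha x) (hb x)
      zero_mem' := fun x ↦ by simp
      smul_mem' := fun c a ha x ↦ by
        rw [smul_eq_mul, mul_assoc]; exact M.mul_mem_left c (ha x) }
  have hle : P ≤ M := fun r hr ↦ by simpa using hr 1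
  refine ⟨P, ⟨fun h ↦ hM.ne_top (top_le_iff.1 (h ▸ hle)), fun a ha r x ↦ ?_,
    fun a b h ↦ ?_⟩, hle⟩
  · rw [mul_assoc]
    exact ha _
  · by_contra! hab
    obtain ⟨x, hx⟩ : ∃ x, b * x ∉ M := not_forall.1 hab.2
    obtain ⟨y, hy⟩ : ∃ y, 1 - y * (b * x) ∈ M := by
      have := hM.1.2 _ (lt_of_le_of_ne (le_sup_left : M ≤ M ⊔ Ideal.span {b * x}) ?_)
      · have h1 : (1 : A) ∈ M ⊔ Ideal.span {b * x} := this ▸ Submodule.mem_top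
        obtain ⟨m, hm, z, hz, hmz⟩ := Submodule.mem_sup.1 h1
        obtain ⟨y, rfl⟩ := Ideal.mem_span_singleton'.1 hz
        exact ⟨y, by rwa [← hmz, add_sub_cancel_right]⟩
      · intro h
        exact hx (h.symm.le (le_sup_right (α := Ideal A) (Ideal.mem_span_singleton_self _)))
    refine hab.1 fun z ↦ ?_
    have h1 := h (z * y) x
    have h2 := M.mul_mem_left (a * z) hy
    convert M.add_mem h2 h1 using 1
    noncomm_ring

theorem primeRadical_le_jacobson : primeRadical A ≤ Ring.jacobson A := by
  rw [Ring.jacobson_eq_sInf_isMaximal]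
  refine le_sInf fun M hM ↦ ?_
  obtain ⟨P, hP, hPM⟩ := exists_isPrimeNC_le_of_isMaximal hM
  exact (sInf_le (show P ∈ {P : Ideal A | P.IsPrimeNC} from hP)).trans hPM

theorem isNilpotentIdeal_primeRadical [IsArtinianRing A] :
    IsNilpotentIdeal (primeRadical A) := by
  obtain ⟨k, hk⟩ := IsSemiprimaryRing.isNilpotent (R := A)
  refine ⟨k, le_bot_iff.1 ?_⟩
  calc primeRadical A ^ (k + 1) ≤ primeRadical A ^ k := Ideal.pow_le_pow_right k.le_succ
    _ ≤ Ring.jacobson A ^ k := Ideal.pow_right_mono primeRadical_le_jacobson k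
    _ ≤ ⊥ := hk.le

theorem isNilpotent_of_mem_primeRadical [IsArtinianRing A] {x : A}
    (hx : x ∈ primeRadical A) : IsNilpotent x := by
  obtain ⟨k, hk⟩ := isNilpotentIdeal_primeRadical (A := A)
  exact ⟨k + 1, by simpa [hk] using Ideal.pow_mem_pow hx (k + 1)⟩

theorem isUnit_of_mul_eq_one_of_isArtinianRing [IsArtinianRing A] {x y : A} (h : x * y = 1) :
    IsUnit y := by
  have hinj : Injective (LinearMap.mulRight A x) := by
    intro a b hab
    have : a * x * y = b * x * y := congrArg (· * y) hab
    simpa [mul_assoc, h] using this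
  obtain ⟨z, hz⟩ := IsArtinian.surjective_of_injective_endomorphism _ hinj 1
  replace hz : z * x = 1 := hz
  have hzy : z = y := by rw [← mul_one z, ← h, ← mul_assoc, hz, one_mul]
  exact ⟨⟨y, x, hzy ▸ hz, h⟩, rfl⟩

theorem isUnit_of_right_regular_of_isArtinianRing [IsArtinianRing A] {y : A}
    (h : ∀ x, x * y = 0 → x = 0) : IsUnit y := by
  have hinj : Injective (LinearMap.mulRight A y) :=
    (injective_iff_map_eq_zero _).2 h
  obtain ⟨x, hx⟩ := IsArtinian.surjective_of_injective_endomorphism _ hinj 1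
  exact isUnit_of_mul_eq_one_of_isArtinianRing hx

/-- In a left Artinian ring, regularity modulo the prime radical implies invertibility. -/
theorem isUnit_of_right_regular_mod_primeRadical [IsArtinianRing A] {y : A}
    (h : ∀ x, x * y ∈ primeRadical A → x ∈ primeRadical A) : IsUnit y := by
  let N : Submodule A A := primeRadical A
  have hle : N ≤ N.comap (LinearMap.mulRight A y) := fun x hx ↦
    (primeRadical A).mul_mem_right y hx
  have hinj : Injective (N.mapQ N (LinearMap.mulRight A y) hle) := by
    refine (injective_iff_map_eq_zero _).2 fun q hq ↦ ?_
    obtain ⟨x, rfl⟩ := N.mkQ_surjective q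
    rw [Submodule.mkQ_apply, Submodule.mapQ_apply, Submodule.Quotient.mk_eq_zero] at hq
    exact (Submodule.Quotient.mk_eq_zero N).2 (h x hq)
  obtain ⟨q, hq⟩ := IsArtinian.surjective_of_injective_endomorphism _ hinj (N.mkQ 1)
  obtain ⟨x, rfl⟩ := N.mkQ_surjective q
  rw [Submodule.mkQ_apply, Submodule.mapQ_apply, Submodule.mkQ_apply,
    Submodule.Quotient.eq] at hq
  have hu : IsUnit (x * y) := by
    have := (isNilpotent_of_mem_primeRadical hq).isUnit_one_add
    simpa using this
  obtain ⟨z, hz⟩ := hu.exists_left_inv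
  exact isUnit_of_mul_eq_one_of_isArtinianRing (x := z * x) (by rwa [mul_assoc])

theorem isTwoSided_map_mul_unit_inv {M : Ideal A} [IsArtinianRing A] {y : Aˣ}
    (h : ∀ x ∈ M, x * y ∈ M) : ∀ x ∈ M, x * (↑y⁻¹ : A) ∈ M := by
  intro x hx
  let f : M →ₗ[A] M := (LinearMap.mulRight A (y : A)).restrict h
  have hinj : Injective f := by
    refine (injective_iff_map_eq_zero _).2 fun q hq ↦ ?_
    have : (q : A) * y = 0 := congrArg Subtype.val hq
    exact Subtype.ext (by simpa using this)
  obtain ⟨q, hq⟩ := IsArtinian.surjective_of_injective_endomorphism f hinj ⟨x, hx⟩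
  have : (q : A) * y = x := congrArg Subtype.val hq
  rw [← this, Units.mul_inv_cancel_right]
  exact q.2

end Prime

section OreLoc

variable {A : Type*} [Ring A] {S : Set A}

/-- `ψ : A →+* L` realizes `L` as the left Ore localization `S⁻¹A`. -/
structure IsOreLoc {A L : Type*} [Ring A] [Ring L] (S : Set A) (ψ : A →+* L) : Prop where
  isUnit : ∀ s ∈ S, IsUnit (ψ s)
  ker : ∀ a : A, ψ a = 0 ↔ ∃ s ∈ S, s * a = 0
  denom : ∀ l : L, ∃ s ∈ S, ∃ a, ψ s * l = ψ a

theorem OreLocModel.isOreLoc {A : Type u} [Ring A] {S : Set A} (m : OreLocModel S) :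
    IsOreLoc S m.ψ :=
  ⟨m.isUnit, m.ker, fun l ↦ let ⟨s, a, hs, h⟩ := m.denom l; ⟨s, hs, a, h⟩⟩

theorem IsLeftOreSubset.exists_common_multiple (hS : IsLeftOreSubset S) (N : ℕ) {t : ℕ → A}
    (ht : ∀ i, t i ∈ S) : ∃ s ∈ S, ∀ i < N, ∃ r, s = r * t i := by
  induction N with
  | zero => exact ⟨1, hS.1, by simp⟩
  | succ N ih =>
    obtain ⟨s, hs, h⟩ := ih
    obtain ⟨u, hu, b, hub⟩ := hS.2.2 (t N) (ht N) s
    refine ⟨u * s, hS.2.1 u hu s hs, fun i hi ↦ ?_⟩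
    rcases Nat.lt_succ_iff_lt_or_eq.1 hi with hi | rfl
    · obtain ⟨r, hr⟩ := h i hi
      exact ⟨u * r, by rw [mul_assoc, ← hr]⟩
    · exact ⟨b, hub⟩

/-- A left Ore set as a submonoid. -/
def IsLeftOreSubset.submonoid (hS : IsLeftOreSubset S) : Submonoid A where
  carrier := S
  mul_mem' := fun {a b} ha hb ↦ hS.2.1 a ha b hb
  one_mem' := hS.1

/-- The Mathlib Ore set structure of a left denominator set. -/
@[reducible] noncomputable def IsLeftDenominatorSet.oreSet (hS : IsLeftDenominatorSet S) :
    OreLocalization.OreSet hS.1.submonoid where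
  ore_right_cancel r₁ r₂ s h := by
    obtain ⟨t, ht, h0⟩ := hS.2 (r₁ - r₂) s s.2 (by rw [sub_mul, h, sub_self])
    exact ⟨⟨t, ht⟩, by rwa [mul_sub, sub_eq_zero] at h0⟩
  oreNum r s := (hS.1.2.2 s s.2 r).choose_spec.2.choose
  oreDenom r s := ⟨(hS.1.2.2 s s.2 r).choose, (hS.1.2.2 s s.2 r).choose_spec.1⟩
  ore_eq r s := (hS.1.2.2 s s.2 r).choose_spec.2.choose_spec

theorem IsLeftDenominatorSet.isOreLoc_numeratorRingHom (hS : IsLeftDenominatorSet S) :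
    letI := hS.oreSet
    IsOreLoc S (OreLocalization.numeratorRingHom (R := A) (S := hS.1.submonoid)) := by
  let := hS.oreSet
  refine ⟨fun s hs ↦ OreLocalization.numerator_isUnit (S := hS.1.submonoid) ⟨s, hs⟩,
    fun a ↦ ?_, fun l ↦ ?_⟩
  · change a /ₒ (1 : hS.1.submonoid) = 0 ↔ _
    rw [OreLocalization.zero_def, OreLocalization.oreDiv_eq_iff]
    constructor
    · rintro ⟨u, v, h, h'⟩
      simp only [Submonoid.smul_def, smul_eq_mul, mul_zero, Submonoid.coe_one, mul_one] at h h'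
      exact ⟨u, u.2, by rw [h', ← h]⟩
    · rintro ⟨s, hs, h⟩
      exact ⟨⟨s, hs⟩, s, by simp [h], by simp⟩
  · induction l using OreLocalization.ind with
    | _ r s =>
      refine ⟨s, s.2, r, ?_⟩
      change ((s : A) /ₒ (1 : hS.1.submonoid)) * (r /ₒ s) = r /ₒ (1 : hS.1.submonoid)
      exact OreLocalization.mul_cancel

theorem IsLeftDenominatorSet.nonempty_oreLocModel {A : Type u} [Ring A] {S : Set A}
    (hS : IsLeftDenominatorSet S) : Nonempty (OreLocModel S) := by
  let := hS.oreSet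
  have h := hS.isOreLoc_numeratorRingHom
  exact ⟨⟨OreLocalization hS.1.submonoid A, OreLocalization.numeratorRingHom, h.isUnit, h.ker,
    fun l ↦ let ⟨s, hs, a, e⟩ := h.denom l; ⟨s, a, hs, e⟩⟩⟩

variable {L B : Type*} [Ring L] [Ring B] {ψ : A →+* L}

theorem IsOreLoc.injective_of_comp (hψ : IsOreLoc S ψ) {θ : L →+* B}
    (h : ∀ a, θ (ψ a) = 0 → ψ a = 0) : Injective θ := by
  refine (injective_iff_map_eq_zero θ).2 fun l hl ↦ ?_
  obtain ⟨s, hs, a, hsa⟩ := hψ.denom l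
  have h0 : ψ a = 0 := h a (by rw [← hsa, map_mul, hl, mul_zero])
  rwa [h0, (hψ.isUnit s hs).mul_right_eq_zero] at hsa

theorem IsOreLoc.bijective_of_comp (hψ : IsOreLoc S ψ) {θ : L →+* B} {χ : A →+* B}
    (hχ : IsOreLoc S χ) (h : ∀ a, θ (ψ a) = χ a) : Bijective θ := by
  refine ⟨hψ.injective_of_comp fun a ha ↦ ?_, fun b ↦ ?_⟩
  · rwa [h, hχ.ker, ← hψ.ker] at ha
  · obtain ⟨s, hs, a, hsa⟩ := hχ.denom b
    obtain ⟨u, hu⟩ := hψ.isUnit s hs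
    refine ⟨↑u⁻¹ * ψ a, (hχ.isUnit s hs).mul_right_injective ?_⟩
    change χ s * _ = χ s * b
    rw [hsa, ← h s, ← map_mul, ← hu, Units.mul_inv_cancel_left, h]

theorem IsLeftDenominatorSet.exists_lift_oreLocalization (hS : IsLeftDenominatorSet S)
    {χ : A →+* B} (hχ : ∀ s ∈ S, IsUnit (χ s)) :
    letI := hS.oreSet
    ∃ θ : OreLocalization hS.1.submonoid A →+* B,
      ∀ a, θ (OreLocalization.numeratorRingHom a) = χ a := by
  let := hS.oreSet
  let χS : hS.1.submonoid →* Bˣ :=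
    IsUnit.liftRight ((χ : A →* B).comp hS.1.submonoid.subtype) fun s ↦ hχ s s.2
  have hχS : ∀ s : hS.1.submonoid, χ s = χS s := fun s ↦ rfl
  exact ⟨OreLocalization.universalHom χ χS hχS, fun a ↦
    OreLocalization.universalHom_commutes χ χS hχS⟩

theorem IsOreLoc.exists_lift (hS : IsLeftDenominatorSet S) (hψ : IsOreLoc S ψ) {χ : A →+* B}
    (hχ : ∀ s ∈ S, IsUnit (χ s)) : ∃ θ : L →+* B, ∀ a, θ (ψ a) = χ a := by
  obtain ⟨θ₁, h₁⟩ := hS.exists_lift_oreLocalization hψ.isUnit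
  obtain ⟨θ₂, h₂⟩ := hS.exists_lift_oreLocalization hχ
  let := hS.oreSet
  let e := RingEquiv.ofBijective θ₁
    (hS.isOreLoc_numeratorRingHom.bijective_of_comp hψ h₁)
  refine ⟨θ₂.comp e.symm.toRingHom, fun a ↦ ?_⟩
  have : e.symm (ψ a) = OreLocalization.numeratorRingHom a :=
    e.symm_apply_eq.2 (h₁ a).symm
  change θ₂ (e.symm (ψ a)) = χ a
  rw [this, h₂]

theorem IsOreLoc.nonempty_ringEquiv (hS : IsLeftDenominatorSet S) (hψ : IsOreLoc S ψ)
    {χ : A →+* B} (hχ : IsOreLoc S χ) : Nonempty (L ≃+* B) :=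
  let ⟨_, h⟩ := hψ.exists_lift hS hχ.isUnit
  ⟨RingEquiv.ofBijective _ (hψ.bijective_of_comp hχ h)⟩

theorem IsOreLoc.mem_map_iff (hS : IsLeftOreSubset S) (hψ : IsOreLoc S ψ) {I : Ideal A} {l : L} :
    l ∈ I.map ψ ↔ ∃ s ∈ S, ∃ a ∈ I, ψ s * l = ψ a := by
  constructor
  · intro hl
    induction hl using Submodule.span_induction with
    | mem x hx =>
      obtain ⟨a, ha, rfl⟩ := hx
      exact ⟨1, hS.1, a, ha, by simp⟩
    | zero => exact ⟨1, hS.1, 0, I.zero_mem, by simp⟩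
    | add x y _ _ hx hy =>
      obtain ⟨s, hs, a, ha, hsa⟩ := hx
      obtain ⟨t, ht, b, hb, htb⟩ := hy
      obtain ⟨u, hu, v, huv⟩ := hS.2.2 t ht s
      refine ⟨u * s, hS.2.1 u hu s hs, u * a + v * b,
        I.add_mem (I.mul_mem_left u ha) (I.mul_mem_left v hb), ?_⟩
      rw [mul_add]
      nth_rewrite 2 [huv]
      simp only [map_mul, map_add, mul_assoc, hsa, htb]
    | smul q x _ hx =>
      obtain ⟨s, hs, a, ha, hsa⟩ := hx
      obtain ⟨t, ht, b, htb⟩ := hψ.denom q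
      obtain ⟨u, hu, v, huv⟩ := hS.2.2 s hs b
      refine ⟨u * t, hS.2.1 u hu t ht, v * a, I.mul_mem_left v ha, ?_⟩
      rw [smul_eq_mul, map_mul, mul_assoc, ← mul_assoc (ψ t), htb, ← mul_assoc, ← map_mul, huv,
        map_mul, mul_assoc, hsa, map_mul]
  · rintro ⟨s, hs, a, ha, h⟩
    obtain ⟨u, hu⟩ := hψ.isUnit s hs
    have : l = ↑u⁻¹ * ψ a := by rw [← h, ← hu, Units.inv_mul_cancel_left]
    rw [this]
    exact Ideal.mul_mem_left _ _ (Ideal.mem_map_of_mem ψ ha)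

theorem IsOreLoc.map_comap (hψ : IsOreLoc S ψ) (J : Ideal L) : (J.comap ψ).map ψ = J := by
  refine le_antisymm Ideal.map_comap_le fun l hl ↦ ?_
  obtain ⟨s, hs, a, h⟩ := hψ.denom l
  obtain ⟨u, hu⟩ := hψ.isUnit s hs
  have : l = ↑u⁻¹ * ψ a := by rw [← h, ← hu, Units.inv_mul_cancel_left]
  rw [this]
  refine Ideal.mul_mem_left _ _ (Ideal.mem_map_of_mem ψ ?_)
  rw [Ideal.mem_comap, ← h]
  exact J.mul_mem_left _ hl

/-- Over a left Artinian localization, two-sided ideals extend to two-sided ideals. -/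
theorem IsOreLoc.isTwoSided_map [IsArtinianRing L] (hS : IsLeftOreSubset S) (hψ : IsOreLoc S ψ)
    (I : Ideal A) [I.IsTwoSided] : (I.map ψ).IsTwoSided := by
  have hmul : ∀ b : A, ∀ l ∈ I.map ψ, l * ψ b ∈ I.map ψ := by
    intro b l hl
    obtain ⟨s, hs, a, ha, h⟩ := (hψ.mem_map_iff hS).1 hl
    exact (hψ.mem_map_iff hS).2 ⟨s, hs, a * b, I.mul_mem_right b ha, by
      rw [← mul_assoc, h, map_mul]⟩
  refine ⟨fun {l} q hl ↦ ?_⟩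
  obtain ⟨t, ht, b, h⟩ := hψ.denom q
  obtain ⟨y, hy⟩ := hψ.isUnit t ht
  have hq : q = ↑y⁻¹ * ψ b := by rw [← h, ← hy, Units.inv_mul_cancel_left]
  rw [hq, ← mul_assoc]
  exact hmul b _ (isTwoSided_map_mul_unit_inv (fun x hx ↦ hy ▸ hmul t x hx) l hl)

theorem isRegElem_of_isUnit_map {χ : A →+* L} (hχ : Injective χ) {c : A} (hc : IsUnit (χ c)) :
    IsRegElem c := by
  refine ⟨fun x hx ↦ ?_, fun x hx ↦ ?_⟩ <;> have := congrArg χ hx <;> apply hχ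
  · rwa [map_mul, map_zero, hc.mul_right_eq_zero, ← map_zero χ] at this
  · rwa [map_mul, map_zero, hc.mul_left_eq_zero, ← map_zero χ] at this

theorem IsLeftQuotRing.isOreLoc {χ : A →+* L} (h : IsLeftQuotRing χ) :
    IsOreLoc (regSet A) χ where
  isUnit := h.isUnit
  ker a := ⟨fun ha ↦ ⟨1, by simp [regSet, IsRegElem], by
    rw [one_mul]; exact h.inj (by rwa [map_zero])⟩, fun ⟨s, hs, hsa⟩ ↦ by
      rw [hs.1 a hsa, map_zero]⟩
  denom l := let ⟨c, r, hc, e⟩ := h.denom l; ⟨c, hc, r, e⟩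

theorem IsLeftQuotRing.isLeftDenominatorSet {χ : A →+* L} (h : IsLeftQuotRing χ) :
    IsLeftDenominatorSet (regSet A) := by
  have h1 : (1 : A) ∈ regSet A := by simp [regSet, IsRegElem]
  refine ⟨⟨h1, fun s hs t ht ↦ ?_, fun s hs a ↦ ?_⟩,
    fun a s hs has ↦ ⟨1, h1, by rw [one_mul]; exact hs.2 a has⟩⟩
  · refine isRegElem_of_isUnit_map h.inj ?_
    rw [map_mul]
    exact (h.isUnit s hs).mul (h.isUnit t ht)
  · obtain ⟨u, hu⟩ := h.isUnit s hs
    obtain ⟨t, b, ht, e⟩ := h.denom (χ a * ↑u⁻¹)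
    refine ⟨t, ht, b, h.inj ?_⟩
    rw [map_mul, map_mul, ← e, ← hu, ← mul_assoc, Units.inv_mul_cancel_right]

/-- A left Artinian ring of left fractions is the left quotient ring. -/
theorem isLeftQuotRing_of_isArtinianRing [IsArtinianRing L] {χ : A →+* L} (hχ : Injective χ)
    (h : ∀ l, ∃ s a, IsUnit (χ s) ∧ χ s * l = χ a) : IsLeftQuotRing χ := by
  refine ⟨hχ, fun c hc ↦ isUnit_of_right_regular_of_isArtinianRing fun l hl ↦ ?_, fun l ↦ ?_⟩
  · obtain ⟨s, a, hs, e⟩ := h l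
    have : a * c = 0 := hχ (by rw [map_mul, ← e, mul_assoc, hl, mul_zero, map_zero])
    rwa [hc.2 a this, map_zero, hs.mul_right_eq_zero] at e
  · obtain ⟨s, a, hs, e⟩ := h l
    exact ⟨s, a, isRegElem_of_isUnit_map hχ hs, e⟩

theorem IsLeftQuotRing.nonempty_ringEquiv {χ : A →+* L} (h : IsLeftQuotRing χ) {χ' : A →+* B}
    (h' : IsLeftQuotRing χ') : Nonempty (L ≃+* B) :=
  h.isOreLoc.nonempty_ringEquiv h.isLeftDenominatorSet h'.isOreLoc

end OreLoc

section ArtinianQuotient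

variable {A Q : Type*} [Ring A] [Ring Q] {φ : A →+* Q}

theorem comap_pow_le (J : Ideal Q) (k : ℕ) : (J.comap φ) ^ k ≤ (J ^ k).comap φ := by
  induction k with
  | zero => simp [Submodule.pow_zero, Ideal.one_eq_top]
  | succ k ih =>
    rw [Submodule.pow_succ, Ideal.mul_le]
    intro x hx y hy
    rw [Ideal.mem_comap, map_mul, Submodule.pow_succ]
    exact Ideal.mul_mem_mul (ih hx) hy

variable [IsArtinianRing Q]

theorem IsLeftQuotRing.isPrimeNC_comap (h : IsLeftQuotRing φ) {P : Ideal Q} (hP : P.IsPrimeNC) :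
    (P.comap φ).IsPrimeNC := by
  refine ⟨fun ht ↦ hP.1 ?_, fun a ha r ↦ ?_, fun a b hab ↦ ?_⟩
  · rw [Ideal.eq_top_iff_one] at ht ⊢
    simpa using ht
  · rw [Ideal.mem_comap, map_mul]
    exact hP.2.1 _ ha _
  · let I : Ideal A :=
      { carrier := {x | ∀ r, φ (x * r * b) ∈ P}
        add_mem' := fun ha hb x ↦ by
          rw [add_mul, add_mul, map_add]; exact P.add_mem (ha x) (hb x)
        zero_mem' := fun x ↦ by simp
        smul_mem' := fun c a ha x ↦ by
          rw [smul_eq_mul, mul_assoc, mul_assoc, map_mul, ← mul_assoc a]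
          exact P.mul_mem_left _ (ha x) }
    have : I.IsTwoSided := ⟨fun {x} y hx r ↦ by rw [mul_assoc x]; exact hx _⟩
    have hI := h.isOreLoc.isTwoSided_map h.isLeftDenominatorSet.1 I
    refine hP.2.2 (φ a) (φ b) fun q ↦ ?_
    have ha : φ a * q ∈ I.map φ := Ideal.mul_mem_right _ _ (Ideal.mem_map_of_mem φ hab)
    obtain ⟨s, hs, x, hx, e⟩ := (h.isOreLoc.mem_map_iff h.isLeftDenominatorSet.1).1 ha
    obtain ⟨u, hu⟩ := h.isUnit s hs
    have hx1 : φ s * (φ a * q * φ b) ∈ P := by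
      rw [← mul_assoc, e, ← map_mul]
      simpa using hx 1
    simpa [← hu] using P.mul_mem_left ↑u⁻¹ hx1

theorem IsLeftQuotRing.comap_primeRadical (h : IsLeftQuotRing φ) :
    (primeRadical Q).comap φ = primeRadical A := by
  have hle : primeRadical A ≤ (primeRadical Q).comap φ := by
    rw [← Ideal.map_le_iff_le_comap]
    refine le_sInf fun P hP ↦ Ideal.map_le_iff_le_comap.2 ?_
    exact sInf_le (h.isPrimeNC_comap hP)
  refine le_antisymm ?_ hle
  obtain ⟨k, hk⟩ := isNilpotentIdeal_primeRadical (A := Q)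
  refine le_primeRadical_of_pow_eq_bot (k := k + 1)
    (le_bot_iff.1 ((comap_pow_le _ _).trans fun x hx ↦ ?_))
  rw [Ideal.mem_comap, hk] at hx
  exact h.inj (hx.trans (map_zero φ).symm)

theorem IsLeftQuotRing.map_mem_primeRadical_iff (h : IsLeftQuotRing φ) {x : A} :
    φ x ∈ primeRadical Q ↔ x ∈ primeRadical A := by
  rw [← h.comap_primeRadical, Ideal.mem_comap]

theorem IsLeftQuotRing.isNilpotentIdeal_primeRadical (h : IsLeftQuotRing φ) :
    IsNilpotentIdeal (primeRadical A) := by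
  obtain ⟨k, hk⟩ := _root_.isNilpotentIdeal_primeRadical (A := Q)
  refine ⟨k, le_bot_iff.1 ?_⟩
  rw [← h.comap_primeRadical]
  refine (comap_pow_le _ _).trans fun x hx ↦ ?_
  rw [Ideal.mem_comap, hk] at hx
  exact h.inj (hx.trans (map_zero φ).symm)

theorem IsLeftQuotRing.regModN_iff (h : IsLeftQuotRing φ) {c : A} :
    RegModN c ↔ IsRegElem c := by
  constructor
  · intro hc
    refine isRegElem_of_isUnit_map h.inj
      (isUnit_of_right_regular_mod_primeRadical fun q hq ↦ ?_)
    obtain ⟨s, a, hs, e⟩ := h.denom q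
    obtain ⟨u, hu⟩ := h.isUnit s hs
    have ha : a * c ∈ primeRadical A := by
      rw [← h.map_mem_primeRadical_iff, map_mul, ← e, mul_assoc]
      exact Ideal.mul_mem_left _ _ hq
    have ha' := h.map_mem_primeRadical_iff.2 (hc.2 a ha)
    simpa [← e, ← hu] using Ideal.mul_mem_left _ (↑u⁻¹ : Q) ha'
  · intro hc
    obtain ⟨u, hu⟩ := h.isUnit c hc
    simp only [RegModN, ← h.map_mem_primeRadical_iff, map_mul, ← hu]
    refine ⟨fun x hx ↦ ?_, fun x hx ↦ ?_⟩
    · simpa using Ideal.mul_mem_left _ (↑u⁻¹ : Q) hx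
    · simpa using Ideal.mul_mem_right (↑u⁻¹ : Q) _ hx

theorem IsLeftQuotRing.map_mem_primeRadical_pow (h : IsLeftQuotRing φ) {i : ℕ} {x : A}
    (hx : x ∈ primeRadical A ^ i) : φ x ∈ primeRadical Q ^ i := by
  rw [← h.comap_primeRadical] at hx
  exact comap_pow_le _ _ hx

theorem IsLeftQuotRing.mem_primeRadical_pow_iff (h : IsLeftQuotRing φ) {i : ℕ} {q : Q} :
    q ∈ primeRadical Q ^ i ↔ ∃ c, IsRegElem c ∧ ∃ x ∈ primeRadical A ^ i, φ c * q = φ x := by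
  have hS := h.isLeftDenominatorSet.1
  constructor
  · intro hq
    suffices primeRadical Q ^ i ≤ (primeRadical A ^ i).map φ from
      (h.isOreLoc.mem_map_iff hS).1 (this hq)
    clear hq
    induction i with
    | zero =>
      intro q _
      obtain ⟨c, a, hc, e⟩ := h.denom q
      exact (h.isOreLoc.mem_map_iff hS).2 ⟨c, hc, a, mem_primeRadical_pow_zero a, e⟩
    | succ i ih =>
      rw [Submodule.pow_succ, Ideal.mul_le]
      intro x hx y hy
      rw [← h.isOreLoc.map_comap (primeRadical Q), h.comap_primeRadical] at hy
      obtain ⟨s, hs, a, ha, e⟩ := (h.isOreLoc.mem_map_iff hS).1 hy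
      obtain ⟨u, hu⟩ := h.isUnit s hs
      have htwo := h.isOreLoc.isTwoSided_map hS (primeRadical A ^ i)
      obtain ⟨t, ht, b, hb, e'⟩ := (h.isOreLoc.mem_map_iff hS).1
        (Ideal.mul_mem_right (↑u⁻¹ : Q) _ (ih hx))
      refine (h.isOreLoc.mem_map_iff hS).2 ⟨t, ht, b * a, mul_mem_primeRadical_pow hb
        (by rwa [Submodule.pow_one]), ?_⟩
      rw [map_mul, ← e', ← e, ← hu]
      simp only [mul_assoc, Units.inv_mul_cancel_left]
  · rintro ⟨c, hc, x, hx, e⟩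
    obtain ⟨u, hu⟩ := h.isUnit c hc
    have : q = ↑u⁻¹ * φ x := by rw [← e, ← hu, Units.inv_mul_cancel_left]
    rw [this]
    exact Ideal.mul_mem_left _ _ (h.map_mem_primeRadical_pow hx)

end ArtinianQuotient

namespace GradedModel

section Rep

variable {R : Type u} [Ring R] (d : GradedModel R)

theorem emb_zero (i : ℕ) : d.emb i 0 = 0 :=
  (d.zero_iff i 0 (zero_mem _)).2 (zero_mem _)

variable {d}

theorem emb_sub {i : ℕ} {x y : R} (hx : x ∈ primeRadical R ^ i) (hy : y ∈ primeRadical R ^ i) :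
    d.emb i (x - y) = d.emb i x - d.emb i y := by
  rw [eq_sub_iff_add_eq, ← d.add i _ _ (sub_mem hx hy) hy, sub_add_cancel]

variable (d) in
/-- `g` is the sum of the classes of `x i ∈ n^i` in degree `i`, almost all of which vanish. -/
def Rep (g : d.G) (x : ℕ → R) : Prop :=
  (∀ i, x i ∈ primeRadical R ^ i) ∧
    ∀ᶠ M in Filter.atTop, g = ∑ i ∈ Finset.range M, d.emb i (x i)

theorem exists_rep (g : d.G) : ∃ x, d.Rep g x := by
  obtain ⟨N, x, hx, hg⟩ := d.gen g
  refine ⟨fun i ↦ if i < N then x i else 0, fun i ↦ ?_, ?_⟩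
  · dsimp only
    split_ifs
    · exact hx i
    · exact zero_mem _
  · filter_upwards [Filter.eventually_ge_atTop N] with M hM
    rw [hg, ← Finset.sum_subset (Finset.range_subset_range.2 hM)]
    · exact Finset.sum_congr rfl fun i hi ↦ by rw [if_pos (Finset.mem_range.1 hi)]
    · intro i _ hi
      rw [if_neg (by simpa using hi), emb_zero]

theorem rep_emb {j : ℕ} {x : R} (hx : x ∈ primeRadical R ^ j) :
    d.Rep (d.emb j x) (Pi.single j x) := by
  refine ⟨fun i ↦ ?_, ?_⟩
  · by_cases h : i = j
    · subst h
      rwa [Pi.single_eq_same]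
    · rw [Pi.single_eq_of_ne h]
      exact zero_mem _
  · filter_upwards [Filter.eventually_gt_atTop j] with M hM
    rw [Finset.sum_eq_single j, Pi.single_eq_same]
    · intro i _ hi
      rw [Pi.single_eq_of_ne hi, emb_zero]
    · intro h
      exact absurd (Finset.mem_range.2 hM) h

namespace Rep

variable {g h : d.G} {x y : ℕ → R}

theorem add (hx : d.Rep g x) (hy : d.Rep h y) : d.Rep (g + h) (fun i ↦ x i + y i) := by
  refine ⟨fun i ↦ add_mem (hx.1 i) (hy.1 i), ?_⟩
  filter_upwards [hx.2, hy.2] with M h1 h2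
  rw [h1, h2, ← Finset.sum_add_distrib]
  exact Finset.sum_congr rfl fun i _ ↦ (d.add i _ _ (hx.1 i) (hy.1 i)).symm

theorem sub (hx : d.Rep g x) (hy : d.Rep h y) : d.Rep (g - h) (fun i ↦ x i - y i) := by
  refine ⟨fun i ↦ sub_mem (hx.1 i) (hy.1 i), ?_⟩
  filter_upwards [hx.2, hy.2] with M h1 h2
  rw [h1, h2, ← Finset.sum_sub_distrib]
  exact Finset.sum_congr rfl fun i _ ↦ (emb_sub (hx.1 i) (hy.1 i)).symm

theorem emb_mul (hx : d.Rep g x) (c : R) : d.Rep (d.emb 0 c * g) (fun i ↦ c * x i) := by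
  refine ⟨fun i ↦ Ideal.mul_mem_left _ c (hx.1 i), ?_⟩
  filter_upwards [hx.2] with M h1
  rw [h1, Finset.mul_sum]
  refine Finset.sum_congr rfl fun i _ ↦ ?_
  rw [d.mul 0 i _ _ (mem_primeRadical_pow_zero c) (hx.1 i), zero_add]

theorem mul_emb (hx : d.Rep g x) (c : R) : d.Rep (g * d.emb 0 c) (fun i ↦ x i * c) := by
  refine ⟨fun i ↦ Ideal.mul_mem_right c _ (hx.1 i), ?_⟩
  filter_upwards [hx.2] with M h1
  rw [h1, Finset.sum_mul]
  refine Finset.sum_congr rfl fun i _ ↦ ?_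
  rw [d.mul i 0 _ _ (hx.1 i) (mem_primeRadical_pow_zero c), add_zero]

theorem eq_zero_iff (hx : d.Rep g x) : g = 0 ↔ ∀ i, x i ∈ primeRadical R ^ (i + 1) := by
  constructor
  · rintro rfl i
    obtain ⟨M, h1, h2⟩ := (hx.2.and (Filter.eventually_gt_atTop i)).exists
    exact (d.zero_iff i _ (hx.1 i)).1 (d.indep M x hx.1 h1.symm i h2)
  · intro h
    obtain ⟨M, h1⟩ := hx.2.exists
    rw [h1]
    exact Finset.sum_eq_zero fun i _ ↦ (d.zero_iff i _ (hx.1 i)).2 (h i)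

theorem sub_mem_of_eq (hx : d.Rep g x) (hy : d.Rep g y) (i : ℕ) :
    x i - y i ∈ primeRadical R ^ (i + 1) :=
  (hx.sub hy).eq_zero_iff.1 (sub_self g) i

end Rep

/-- A ring homomorphism out of `gr R` is given by a compatible family of maps on the
`n^i/n^{i+1}`. -/
theorem exists_hom {B : Type*} [Ring B] (d : GradedModel R) (θ : ℕ → R → B)
    (hadd : ∀ i, ∀ x ∈ primeRadical R ^ i, ∀ y ∈ primeRadical R ^ i,
      θ i (x + y) = θ i x + θ i y)
    (hzero : ∀ i, ∀ x ∈ primeRadical R ^ (i + 1), θ i x = 0)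
    (hmul : ∀ i j, ∀ x ∈ primeRadical R ^ i, ∀ y ∈ primeRadical R ^ j,
      θ i x * θ j y = θ (i + j) (x * y))
    (hone : θ 0 1 = 1) :
    ∃ Θ : d.G →+* B, ∀ i, ∀ x ∈ primeRadical R ^ i, Θ (d.emb i x) = θ i x := by
  have hcongr : ∀ {g x y}, d.Rep g x → d.Rep g y → ∀ i, θ i (x i) = θ i (y i) := by
    intro g x y hx hy i
    have h := hx.sub_mem_of_eq hy i
    rw [← sub_add_cancel (x i) (y i), hadd i _ (sub_mem (hx.1 i) (hy.1 i)) _ (hy.1 i),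
      hzero i _ h, zero_add]
  have hex : ∀ g : d.G, ∃ b : B, ∀ x, d.Rep g x →
      ∀ᶠ M in Filter.atTop, ∑ i ∈ Finset.range M, θ i (x i) = b := by
    intro g
    obtain ⟨x, hx⟩ := exists_rep g
    obtain ⟨N, hN⟩ := Filter.eventually_atTop.1 hx.2
    refine ⟨∑ i ∈ Finset.range N, θ i (x i), fun y hy ↦ ?_⟩
    filter_upwards [Filter.eventually_ge_atTop N] with M hM
    rw [Finset.sum_congr rfl fun i _ ↦ hcongr hy hx i]
    refine (Finset.sum_subset (Finset.range_subset_range.2 hM) fun i _ hi ↦ ?_).symm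
    have hi' : N ≤ i := by simpa using hi
    have h := hN (i + 1) (by lia)
    rw [Finset.sum_range_succ, ← hN i hi', left_eq_add, d.zero_iff i _ (hx.1 i)] at h
    exact hzero i _ h
  choose T hT using hex
  have hTadd : ∀ g h, T (g + h) = T g + T h := by
    intro g h
    obtain ⟨x, hx⟩ := exists_rep g
    obtain ⟨y, hy⟩ := exists_rep h
    obtain ⟨M, ⟨h1, h2⟩, h3⟩ := (((hT g x hx).and (hT h y hy)).and (hT _ _ (hx.add hy))).exists
    rw [← h1, ← h2, ← h3, ← Finset.sum_add_distrib]
    exact Finset.sum_congr rfl fun i _ ↦ hadd i _ (hx.1 i) _ (hy.1 i)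
  have hTemb : ∀ j, ∀ x ∈ primeRadical R ^ j, T (d.emb j x) = θ j x := by
    intro j x hx
    obtain ⟨M, h1, h2⟩ := ((hT _ _ (rep_emb hx)).and (Filter.eventually_gt_atTop j)).exists
    rw [← h1, Finset.sum_eq_single j, Pi.single_eq_same]
    · intro i _ hi
      rw [Pi.single_eq_of_ne hi, hzero i 0 (zero_mem _)]
    · intro h
      exact absurd (Finset.mem_range.2 h2) h
  let T' : d.G →+ B := AddMonoidHom.mk' T hTadd
  refine ⟨{ T' with
    map_one' := ?_
    map_mul' := fun g h ↦ ?_ }, hTemb⟩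
  · change T 1 = 1
    rw [← d.one, hTemb 0 1 (mem_primeRadical_pow_zero 1), hone]
  · change T' (g * h) = T' g * T' h
    obtain ⟨N, x, hx, rfl⟩ := d.gen g
    obtain ⟨M, y, hy, rfl⟩ := d.gen h
    simp only [Finset.sum_mul_sum, map_sum]
    refine Finset.sum_congr rfl fun i _ ↦ Finset.sum_congr rfl fun j _ ↦ ?_
    rw [d.mul i j _ _ (hx i) (hy j)]
    change T _ = T _ * T _
    rw [hTemb _ _ (mul_mem_primeRadical_pow (hx i) (hy j)), hTemb _ _ (hx i), hTemb _ _ (hy j),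
      hmul i j _ (hx i) _ (hy j)]

end Rep

section Existence

open Polynomial

variable (A : Type u) [Ring A]

/-- The Rees ring `⨁ n^i X^i` of the prime radical filtration. -/
def rees : Subring A[X] where
  carrier := {p | ∀ i, p.coeff i ∈ primeRadical A ^ i}
  mul_mem' := fun {p q} hp hq i ↦ by
    rw [coeff_mul]
    refine sum_mem fun ij hij ↦ ?_
    rw [← Finset.HasAntidiagonal.mem_antidiagonal.1 hij]
    exact mul_mem_primeRadical_pow (hp _) (hq _)
  one_mem' := fun i ↦ by
    rw [coeff_one]
    split_ifs with h
    · rw [h]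
      exact mem_primeRadical_pow_zero 1
    · exact zero_mem _
  add_mem' := fun {p q} hp hq i ↦ by
    rw [coeff_add]
    exact add_mem (hp i) (hq i)
  zero_mem' := fun i ↦ zero_mem _
  neg_mem' := fun {p} hp i ↦ by
    rw [coeff_neg]
    exact neg_mem (hp i)

/-- The ideal `⨁ n^{i+1} X^i` of the Rees ring. -/
def reesIdeal : Ideal (rees A) where
  carrier := {p | ∀ i, (p : A[X]).coeff i ∈ primeRadical A ^ (i + 1)}
  add_mem' := fun {p q} hp hq i ↦ by
    rw [Subring.coe_add, coeff_add]
    exact add_mem (hp i) (hq i)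
  zero_mem' := fun i ↦ zero_mem _
  smul_mem' := fun p q hq i ↦ by
    rw [smul_eq_mul, Subring.coe_mul, coeff_mul]
    refine sum_mem fun ij hij ↦ ?_
    rw [← Finset.HasAntidiagonal.mem_antidiagonal.1 hij, add_assoc]
    exact mul_mem_primeRadical_pow (p.2 _) (hq _)

instance : (reesIdeal A).IsTwoSided :=
  ⟨fun {p} q hp i ↦ by
    rw [Subring.coe_mul, coeff_mul]
    refine sum_mem fun ij hij ↦ ?_
    rw [← Finset.HasAntidiagonal.mem_antidiagonal.1 hij, add_right_comm]
    exact mul_mem_primeRadical_pow (hp _) (q.2 _)⟩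

variable {A}

/-- The homogeneous element `x X^i` of the Rees ring. -/
noncomputable def reesMonomial (i : ℕ) (x : A) (hx : x ∈ primeRadical A ^ i) : rees A :=
  ⟨monomial i x, fun j ↦ by
    rw [coeff_monomial]
    split_ifs with h
    · rwa [← h]
    · exact zero_mem _⟩

theorem sum_reesMonomial_coeff {x : ℕ → A} (hx : ∀ i, x i ∈ primeRadical A ^ i) (N j : ℕ) :
    ((∑ i ∈ Finset.range N, reesMonomial i (x i) (hx i) : rees A) : A[X]).coeff j =
      if j < N then x j else 0 := by
  rw [AddSubmonoidClass.coe_finsetSum, finsetSum_coeff]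
  simp [reesMonomial, coeff_monomial]

open Classical in
/-- The class of `x ∈ n^i` in degree `i` of the quotient of the Rees ring. -/
noncomputable def reesEmb (i : ℕ) (x : A) : rees A ⧸ reesIdeal A :=
  if hx : x ∈ primeRadical A ^ i then Ideal.Quotient.mk _ (reesMonomial i x hx) else 0

theorem reesEmb_of_mem {i : ℕ} {x : A} (hx : x ∈ primeRadical A ^ i) :
    reesEmb i x = Ideal.Quotient.mk (reesIdeal A) (reesMonomial i x hx) :=
  dif_pos hx

theorem sum_reesEmb {x : ℕ → A} (hx : ∀ i, x i ∈ primeRadical A ^ i) (N : ℕ) :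
    ∑ i ∈ Finset.range N, reesEmb i (x i) =
      Ideal.Quotient.mk (reesIdeal A) (∑ i ∈ Finset.range N, reesMonomial i (x i) (hx i)) := by
  rw [map_sum]
  exact Finset.sum_congr rfl fun i _ ↦ reesEmb_of_mem (hx i)

theorem reesEmb_eq_zero_iff {i : ℕ} {x : A} (hx : x ∈ primeRadical A ^ i) :
    reesEmb i x = 0 ↔ x ∈ primeRadical A ^ (i + 1) := by
  rw [reesEmb_of_mem hx, Ideal.Quotient.eq_zero_iff_mem]
  refine ⟨fun h ↦ by simpa [reesMonomial] using h i, fun h j ↦ ?_⟩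
  simp only [reesMonomial, coeff_monomial]
  split_ifs with hij
  · rwa [← hij]
  · exact zero_mem _

variable (A) in
theorem nonempty : Nonempty (GradedModel A) := by
  refine ⟨⟨rees A ⧸ reesIdeal A, reesEmb, fun i x y hx hy ↦ ?_, fun i x hx ↦
    reesEmb_eq_zero_iff hx, fun i j x y hx hy ↦ ?_, ?_, fun g ↦ ?_, fun N x hx h i hi ↦ ?_⟩⟩
  · rw [reesEmb_of_mem hx, reesEmb_of_mem hy, reesEmb_of_mem (add_mem hx hy), ← map_add]
    exact congrArg _ (Subtype.ext (map_add (monomial i) x y))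
  · rw [reesEmb_of_mem hx, reesEmb_of_mem hy, reesEmb_of_mem (mul_mem_primeRadical_pow hx hy),
      ← map_mul]
    exact congrArg _ (Subtype.ext (monomial_mul_monomial i j x y))
  · rw [reesEmb_of_mem (mem_primeRadical_pow_zero 1), ← map_one (Ideal.Quotient.mk _)]
    exact congrArg _ (Subtype.ext monomial_zero_one)
  · obtain ⟨p, rfl⟩ := Ideal.Quotient.mk_surjective g
    refine ⟨(p : A[X]).natDegree + 1, (p : A[X]).coeff, p.2, ?_⟩
    rw [sum_reesEmb p.2]
    refine congrArg _ (Subtype.ext (Polynomial.ext fun j ↦ ?_))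
    rw [sum_reesMonomial_coeff p.2]
    split_ifs with hj
    · rfl
    · exact coeff_eq_zero_of_natDegree_lt (by lia)
  · rw [sum_reesEmb hx, Ideal.Quotient.eq_zero_iff_mem] at h
    have := h i
    rw [sum_reesMonomial_coeff hx, if_pos hi] at this
    exact (reesEmb_eq_zero_iff (hx i)).2 this

end Existence

end GradedModel

section Regular

variable {R : Type u} [Ring R]

theorem regModN_one : RegModN (1 : R) := by simp [RegModN]

theorem RegModN.mul {a b : R} (ha : RegModN a) (hb : RegModN b) : RegModN (a * b) :=
  ⟨fun x hx ↦ hb.1 x (ha.1 _ (by rwa [← mul_assoc])),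
    fun x hx ↦ ha.2 x (hb.2 _ (by rwa [mul_assoc]))⟩

theorem GradedModel.emb_zero_mul (d : GradedModel R) (a b : R) :
    d.emb 0 a * d.emb 0 b = d.emb 0 (a * b) :=
  d.mul 0 0 a b (mem_primeRadical_pow_zero a) (mem_primeRadical_pow_zero b)

theorem GradedModel.emb_zero_mul_emb (d : GradedModel R) (a : R) {i : ℕ} {b : R}
    (hb : b ∈ primeRadical R ^ i) : d.emb 0 a * d.emb i b = d.emb i (a * b) := by
  rw [d.mul 0 i a b (mem_primeRadical_pow_zero a) hb, zero_add]

theorem GradedModel.emb_mul_emb_zero (d : GradedModel R) {i : ℕ} {a : R}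
    (ha : a ∈ primeRadical R ^ i) (b : R) : d.emb i a * d.emb 0 b = d.emb i (a * b) := by
  rw [d.mul i 0 a b ha (mem_primeRadical_pow_zero b), add_zero]

theorem one_mem_gradedRegSet (d : GradedModel R) : (1 : d.G) ∈ gradedRegSet d :=
  ⟨1, regModN_one, d.one.symm⟩

theorem mul_mem_gradedRegSet (d : GradedModel R) {s t : d.G} (hs : s ∈ gradedRegSet d)
    (ht : t ∈ gradedRegSet d) : s * t ∈ gradedRegSet d := by
  obtain ⟨a, ha, rfl⟩ := hs
  obtain ⟨b, hb, rfl⟩ := ht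
  exact ⟨a * b, ha.mul hb, d.emb_zero_mul a b⟩

end Regular

/-- The associated graded ring of a left Artinian ring is left Artinian. -/
theorem GradedModel.isArtinianRing {Q : Type u} [Ring Q] [IsArtinianRing Q]
    (d : GradedModel Q) : IsArtinianRing d.G := by
  obtain ⟨k, hk⟩ := isNilpotentIdeal_primeRadical (A := Q)
  let lead (J : Ideal d.G) (i : ℕ) : Ideal Q :=
    { carrier := {x | ∃ g ∈ J, ∃ y, d.Rep g y ∧ (∀ j < i, y j = 0) ∧ y i = x}
      add_mem' := by
        rintro _ _ ⟨g, hg, y, hy, h0, rfl⟩ ⟨g', hg', y', hy', h0', rfl⟩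
        exact ⟨g + g', J.add_mem hg hg', _, hy.add hy', fun j hj ↦ by
          rw [h0 j hj, h0' j hj, add_zero], rfl⟩
      zero_mem' := ⟨0, J.zero_mem, fun _ ↦ 0, ⟨fun _ ↦ zero_mem _, by
        simp [GradedModel.emb_zero]⟩, fun _ _ ↦ rfl, rfl⟩
      smul_mem' := by
        rintro c _ ⟨g, hg, y, hy, h0, rfl⟩
        exact ⟨d.emb 0 c * g, J.mul_mem_left _ hg, _, hy.emb_mul c, fun j hj ↦ by
          rw [h0 j hj, mul_zero], rfl⟩ }
  have key : ∀ J J' : Ideal d.G, J ≤ J' → (∀ i < k + 1, lead J' i ≤ lead J i) → J' ≤ J := by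
    intro J J' hJ hlead
    have claim : ∀ m i, i + m = k + 1 → ∀ g ∈ J', ∀ y, d.Rep g y → (∀ j < i, y j = 0) →
        g ∈ J := by
      intro m
      induction m with
      | zero =>
        intro i hi g _ y hy h0
        have : g = 0 := hy.eq_zero_iff.2 fun j ↦ by
          rcases lt_or_ge j i with hj | hj
          · rw [h0 j hj]
            exact zero_mem _
          · have := Ideal.pow_le_pow_right (show k + 1 ≤ j by lia) (hy.1 j)
            rw [hk] at this
            rw [(Submodule.mem_bot Q).1 this]
            exact zero_mem _
        rw [this]
        exact J.zero_mem
      | succ m ih =>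
        intro i hi g hg y hy h0
        obtain ⟨g', hg', y', hy', h0', h1⟩ := hlead i (by lia) ⟨g, hg, y, hy, h0, rfl⟩
        have := ih (i + 1) (by lia) (g - g') (J'.sub_mem hg (hJ hg')) _ (hy.sub hy')
          fun j hj ↦ by
            rcases Nat.lt_succ_iff_lt_or_eq.1 hj with hj | rfl
            · rw [h0 j hj, h0' j hj, sub_zero]
            · rw [h1, sub_self]
        simpa using J.add_mem this hg'
    intro g hg
    obtain ⟨y, hy⟩ := GradedModel.exists_rep g
    exact claim (k + 1) 0 (by lia) g hg y hy (by simp)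
  have hmono : StrictMono fun (J : Ideal d.G) (i : Fin (k + 1)) ↦ lead J i := by
    intro J J' h
    refine lt_of_le_not_ge (fun i ↦ ?_) fun hle ↦
      h.not_ge (key J J' h.le fun i hi ↦ hle ⟨i, hi⟩)
    rintro _ ⟨g, hg, y, hy, h0, rfl⟩
    exact ⟨g, h.le hg, y, hy, h0, rfl⟩
  have : WellFoundedLT (Ideal Q) := ‹IsArtinianRing Q›
  exact hmono.wellFoundedLT

section QuotToGraded

variable {R Q : Type u} [Ring R] [Ring Q] [IsArtinianRing Q] {φ : R →+* Q}

theorem IsLeftQuotRing.exists_mul_eq_zero_of_rep (h : IsLeftQuotRing φ) {d : GradedModel R}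
    {g : d.G} {x : ℕ → R} (hx : d.Rep g x) (h0 : ∀ i, φ (x i) ∈ primeRadical Q ^ (i + 1)) :
    ∃ s ∈ gradedRegSet d, s * g = 0 := by
  have hex : ∀ i, ∃ t, IsRegElem t ∧ t * x i ∈ primeRadical R ^ (i + 1) := by
    intro i
    obtain ⟨c, hc, y, hy, e⟩ := h.mem_primeRadical_pow_iff.1 (h0 i)
    exact ⟨c, hc, by rwa [h.inj ((map_mul φ c (x i)).trans e)]⟩
  choose t ht htx using hex
  obtain ⟨M, hM⟩ := hx.2.exists
  obtain ⟨s, hs, hr⟩ := h.isLeftDenominatorSet.1.exists_common_multiple M ht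
  refine ⟨d.emb 0 s, ⟨s, h.regModN_iff.2 hs, rfl⟩, ?_⟩
  rw [hM, Finset.mul_sum]
  refine Finset.sum_eq_zero fun i hi ↦ ?_
  obtain ⟨r, rfl⟩ := hr i (Finset.mem_range.1 hi)
  rw [d.emb_zero_mul_emb _ (hx.1 i), d.zero_iff i _ (Ideal.mul_mem_left _ _ (hx.1 i)), mul_assoc]
  exact Ideal.mul_mem_left _ _ (htx i)

theorem IsLeftQuotRing.isLeftDenominatorSet_gradedRegSet (h : IsLeftQuotRing φ)
    (d : GradedModel R) : IsLeftDenominatorSet (gradedRegSet d) := by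
  refine ⟨⟨one_mem_gradedRegSet d, fun s hs t ht ↦ mul_mem_gradedRegSet d hs ht, ?_⟩, ?_⟩
  · rintro _ ⟨c, hc, rfl⟩ g
    obtain ⟨u, hu⟩ := h.isUnit c (h.regModN_iff.1 hc)
    obtain ⟨N, x, hx, rfl⟩ := d.gen g
    have hex : ∀ i, ∃ t, IsRegElem t ∧ ∃ y ∈ primeRadical R ^ i, t * x i = y * c := by
      intro i
      obtain ⟨t, ht, y, hy, e⟩ := h.mem_primeRadical_pow_iff.1
        (Ideal.mul_mem_right (↑u⁻¹ : Q) _ (h.map_mem_primeRadical_pow (hx i)))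
      refine ⟨t, ht, y, hy, h.inj ?_⟩
      rw [map_mul, map_mul, ← e, ← hu, ← mul_assoc, Units.inv_mul_cancel_right]
    choose t ht y hy hty using hex
    obtain ⟨s, hs, hr⟩ := h.isLeftDenominatorSet.1.exists_common_multiple N ht
    have hr' : ∀ i, ∃ r, i < N → s = r * t i := fun i ↦ by
      by_cases hi : i < N
      · obtain ⟨r, hr⟩ := hr i hi
        exact ⟨r, fun _ ↦ hr⟩
      · exact ⟨0, fun hi' ↦ absurd hi' hi⟩
    choose r hr using hr'
    refine ⟨d.emb 0 s, ⟨s, h.regModN_iff.2 hs, rfl⟩,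
      ∑ i ∈ Finset.range N, d.emb i (r i * y i), ?_⟩
    rw [Finset.mul_sum, Finset.sum_mul]
    refine Finset.sum_congr rfl fun i hi ↦ ?_
    rw [d.emb_zero_mul_emb _ (hx i), d.emb_mul_emb_zero (Ideal.mul_mem_left _ _ (hy i)),
      hr i (Finset.mem_range.1 hi), mul_assoc, mul_assoc, hty]
  · rintro g _ ⟨c, hc, rfl⟩ h0
    obtain ⟨x, hx⟩ := GradedModel.exists_rep g
    obtain ⟨u, hu⟩ := h.isUnit c (h.regModN_iff.1 hc)
    refine h.exists_mul_eq_zero_of_rep hx fun i ↦ ?_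
    have := h.map_mem_primeRadical_pow ((hx.mul_emb c).eq_zero_iff.1 h0 i)
    rw [map_mul, ← hu] at this
    simpa using Ideal.mul_mem_right (↑u⁻¹ : Q) _ this

/-- The associated graded ring of the left Artinian left quotient ring of `R` is the
localization of the associated graded ring of `R`. -/
theorem IsLeftQuotRing.exists_isOreLoc_gradedRegSet (h : IsLeftQuotRing φ) (d : GradedModel R)
    (dQ : GradedModel Q) : ∃ ψ : d.G →+* dQ.G, IsOreLoc (gradedRegSet d) ψ := by
  obtain ⟨ψ, hψ⟩ := d.exists_hom (fun i x ↦ dQ.emb i (φ x))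
    (fun i x hx y hy ↦ by
      rw [map_add, dQ.add i _ _ (h.map_mem_primeRadical_pow hx) (h.map_mem_primeRadical_pow hy)])
    (fun i x hx ↦ (dQ.zero_iff i _ (h.map_mem_primeRadical_pow
      (Ideal.pow_le_pow_right i.le_succ hx))).2 (h.map_mem_primeRadical_pow hx))
    (fun i j x hx y hy ↦ by
      rw [map_mul, dQ.mul i j _ _ (h.map_mem_primeRadical_pow hx)
        (h.map_mem_primeRadical_pow hy)])
    (by rw [map_one, dQ.one])
  have hrep : ∀ {g x}, d.Rep g x → dQ.Rep (ψ g) (fun i ↦ φ (x i)) := by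
    intro g x hx
    refine ⟨fun i ↦ h.map_mem_primeRadical_pow (hx.1 i), ?_⟩
    filter_upwards [hx.2] with M hM
    rw [hM, map_sum]
    exact Finset.sum_congr rfl fun i _ ↦ hψ i _ (hx.1 i)
  have hunit : ∀ s ∈ gradedRegSet d, IsUnit (ψ s) := by
    rintro _ ⟨c, hc, rfl⟩
    rw [hψ 0 c (mem_primeRadical_pow_zero c)]
    obtain ⟨u, hu⟩ := h.isUnit c (h.regModN_iff.1 hc)
    refine ⟨⟨dQ.emb 0 ↑u, dQ.emb 0 ↑u⁻¹, ?_, ?_⟩, by rw [← hu]⟩ <;>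
      rw [dQ.emb_zero_mul]
    · rw [Units.mul_inv, dQ.one]
    · rw [Units.inv_mul, dQ.one]
  refine ⟨ψ, hunit, fun g ↦ ⟨fun hg ↦ ?_, ?_⟩, fun l ↦ ?_⟩
  · obtain ⟨x, hx⟩ := GradedModel.exists_rep g
    exact h.exists_mul_eq_zero_of_rep hx ((hrep hx).eq_zero_iff.1 hg)
  · rintro ⟨s, hs, h0⟩
    have := congrArg ψ h0
    rwa [map_mul, map_zero, (hunit s hs).mul_right_eq_zero] at this
  · obtain ⟨N, q, hq, rfl⟩ := dQ.gen l
    choose t ht x hx htx using fun i ↦ h.mem_primeRadical_pow_iff.1 (hq i)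
    obtain ⟨s, hs, hr⟩ := h.isLeftDenominatorSet.1.exists_common_multiple N ht
    have hr' : ∀ i, ∃ r, i < N → s = r * t i := fun i ↦ by
      by_cases hi : i < N
      · obtain ⟨r, hr⟩ := hr i hi
        exact ⟨r, fun _ ↦ hr⟩
      · exact ⟨0, fun hi' ↦ absurd hi' hi⟩
    choose r hr using hr'
    refine ⟨d.emb 0 s, ⟨s, h.regModN_iff.2 hs, rfl⟩,
      ∑ i ∈ Finset.range N, d.emb i (r i * x i), ?_⟩
    rw [hψ 0 s (mem_primeRadical_pow_zero s), Finset.mul_sum, map_sum]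
    refine Finset.sum_congr rfl fun i hi ↦ ?_
    rw [dQ.emb_zero_mul_emb _ (hq i), hψ i _ (Ideal.mul_mem_left _ _ (hx i)),
      hr i (Finset.mem_range.1 hi), map_mul, map_mul, mul_assoc, htx]

end QuotToGraded

section GradedToQuot

variable {R : Type u} [Ring R] {d : GradedModel R}

theorem isLeftDenominatorSet_regModN (hd : IsLeftDenominatorSet (gradedRegSet d))
    (hn : IsNilpotentIdeal (primeRadical R)) (hC : ∀ c : R, RegModN c → IsRegElem c) :
    IsLeftDenominatorSet {c : R | RegModN c} := by
  obtain ⟨k, hk⟩ := hn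
  refine ⟨⟨regModN_one, fun s hs t ht ↦ hs.mul ht, fun c hc ↦ ?_⟩,
    fun a s hs has ↦ ⟨1, regModN_one, by rw [one_mul]; exact (hC s hs).2 a has⟩⟩
  have claim : ∀ m i, i + m = k + 1 → ∀ r ∈ primeRadical R ^ i,
      ∃ t, RegModN t ∧ ∃ b, t * r = b * c := by
    intro m
    induction m with
    | zero =>
      intro i hi r hr
      rw [show i = k + 1 by lia, hk, Submodule.mem_bot] at hr
      exact ⟨1, regModN_one, 0, by rw [hr, mul_zero, zero_mul]⟩
    | succ m ih =>
      intro i hi r hr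
      obtain ⟨_, ⟨t, ht, rfl⟩, b, hb⟩ := hd.1.2.2 _ ⟨c, hc, rfl⟩ (d.emb i r)
      obtain ⟨y, hy⟩ := GradedModel.exists_rep b
      have h1 := ((GradedModel.rep_emb hr).emb_mul t).sub_mem_of_eq (hb ▸ hy.mul_emb c) i
      rw [Pi.single_eq_same] at h1
      obtain ⟨t', ht', b', e⟩ := ih (i + 1) (by lia) _ h1
      refine ⟨t' * t, ht'.mul ht, t' * y i + b', ?_⟩
      rw [add_mul, ← e]
      noncomm_ring
  exact fun r ↦ claim (k + 1) 0 (by lia) r (mem_primeRadical_pow_zero r)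

/-- The ideal of `gr R` spanned by the leading forms of the elements of `I`. -/
def GradedModel.symbolIdeal (d : GradedModel R) (I : Ideal R) : Ideal d.G where
  carrier := {g | ∃ x, d.Rep g x ∧ ∀ i, x i ∈ I}
  add_mem' := by
    rintro g h ⟨x, hx, hxI⟩ ⟨y, hy, hyI⟩
    exact ⟨_, hx.add hy, fun i ↦ I.add_mem (hxI i) (hyI i)⟩
  zero_mem' := ⟨fun _ ↦ 0, ⟨fun _ ↦ zero_mem _, by simp [GradedModel.emb_zero]⟩,
    fun _ ↦ I.zero_mem⟩
  smul_mem' := by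
    rintro a g ⟨x, hx, hxI⟩
    let T : AddSubmonoid d.G :=
      { carrier := {g | ∃ x, d.Rep g x ∧ ∀ i, x i ∈ I}
        add_mem' := by
          rintro g h ⟨x, hx, hxI⟩ ⟨y, hy, hyI⟩
          exact ⟨_, hx.add hy, fun i ↦ I.add_mem (hxI i) (hyI i)⟩
        zero_mem' := ⟨fun _ ↦ 0, ⟨fun _ ↦ zero_mem _, by simp [GradedModel.emb_zero]⟩,
          fun _ ↦ I.zero_mem⟩ }
    change a * g ∈ T
    obtain ⟨N, y, hy, rfl⟩ := d.gen a
    obtain ⟨M, hM⟩ := hx.2.exists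
    rw [hM, Finset.sum_mul_sum]
    refine sum_mem fun i _ ↦ sum_mem fun j _ ↦ ?_
    rw [d.mul i j _ _ (hy i) (hx.1 j)]
    refine ⟨_, GradedModel.rep_emb (mul_mem_primeRadical_pow (hy i) (hx.1 j)), fun l ↦ ?_⟩
    by_cases hl : l = i + j
    · rw [hl, Pi.single_eq_same]
      exact I.mul_mem_left _ (hxI j)
    · rw [Pi.single_eq_of_ne hl]
      exact I.zero_mem

/-- If the localization of `gr R` is left Artinian, then so is the localization of `R`. -/
theorem isArtinianRing_of_isOreLoc_gradedRegSet {L Q : Type*} [Ring L] [Ring Q]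
    [IsArtinianRing L] (hd : IsLeftDenominatorSet (gradedRegSet d))
    (hn : IsNilpotentIdeal (primeRadical R)) {ψ : d.G →+* L}
    (hψ : IsOreLoc (gradedRegSet d) ψ) {φ : R →+* Q} (hφ : IsOreLoc {c : R | RegModN c} φ) :
    IsArtinianRing Q := by
  obtain ⟨k, hk⟩ := hn
  let K (J : Ideal Q) : Ideal L := (d.symbolIdeal (J.comap φ)).map ψ
  have key : ∀ J J' : Ideal Q, J ≤ J' → K J' ≤ K J → J' ≤ J := by
    intro J J' hJ hK
    have claim : ∀ m i, i + m = k + 1 → ∀ x ∈ primeRadical R ^ i, φ x ∈ J' → φ x ∈ J := by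
      intro m
      induction m with
      | zero =>
        intro i hi x hx _
        rw [show i = k + 1 by lia, hk, Submodule.mem_bot] at hx
        rw [hx, map_zero]
        exact J.zero_mem
      | succ m ih =>
        intro i hi x hx hxJ
        have hx' : d.emb i x ∈ d.symbolIdeal (J'.comap φ) := by
          refine ⟨_, GradedModel.rep_emb hx, fun j ↦ ?_⟩
          by_cases hj : j = i
          · subst hj
            rwa [Pi.single_eq_same]
          · rw [Pi.single_eq_of_ne hj]
            exact zero_mem _
        obtain ⟨_, ⟨s, hs, rfl⟩, g, ⟨y, hy, hyJ⟩, e⟩ :=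
          (hψ.mem_map_iff hd.1).1 (hK (Ideal.mem_map_of_mem ψ hx'))
        rw [← map_mul, ← sub_eq_zero, ← map_sub, hψ.ker] at e
        obtain ⟨_, ⟨t, ht, rfl⟩, e⟩ := e
        have h1 := ((((GradedModel.rep_emb hx).emb_mul s).sub hy).emb_mul t).eq_zero_iff.1 e i
        rw [Pi.single_eq_same] at h1
        have hyJ' : φ (y i) ∈ J := hyJ i
        have h2 := ih (i + 1) (by lia) _ h1 (by
          rw [map_mul, map_sub, map_mul]
          exact J'.mul_mem_left _ (J'.sub_mem (J'.mul_mem_left _ hxJ) (hJ hyJ')))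
        rw [map_mul, map_sub, map_mul] at h2
        obtain ⟨v, hv⟩ := hφ.isUnit t ht
        obtain ⟨u, hu⟩ := hφ.isUnit s hs
        rw [← hv, ← hu] at h2
        have h3 := J.mul_mem_left (↑v⁻¹ : Q) h2
        rw [Units.inv_mul_cancel_left] at h3
        simpa using J.mul_mem_left (↑u⁻¹ : Q) (J.add_mem h3 hyJ')
    rw [← hφ.map_comap J', Ideal.map_le_iff_le_comap]
    exact fun x hx ↦ claim (k + 1) 0 (by lia) x (mem_primeRadical_pow_zero x) hx
  have hmono : StrictMono K := by
    intro J J' h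
    refine lt_of_le_not_ge (Ideal.map_mono ?_) fun hle ↦ h.not_ge (key J J' h.le hle)
    rintro g ⟨x, hx, hxJ⟩
    exact ⟨x, hx, fun i ↦ h.le (hxJ i)⟩
  have : WellFoundedLT (Ideal L) := ‹IsArtinianRing L›
  exact hmono.wellFoundedLT

theorem hasArtinianLeftQuot_of_oreLocModel (hd : IsLeftDenominatorSet (gradedRegSet d))
    (m : OreLocModel (gradedRegSet d)) [IsArtinianRing m.L]
    (hn : IsNilpotentIdeal (primeRadical R)) (hC : ∀ c : R, RegModN c → IsRegElem c) :
    HasArtinianLeftQuot R := by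
  obtain ⟨q⟩ := (isLeftDenominatorSet_regModN hd hn hC).nonempty_oreLocModel
  have hq := q.isOreLoc
  have hart := isArtinianRing_of_isOreLoc_gradedRegSet hd hn m.isOreLoc hq
  have hinj : Injective q.ψ := by
    refine (injective_iff_map_eq_zero _).2 fun a ha ↦ ?_
    obtain ⟨s, hs, h0⟩ := (hq.ker a).1 ha
    exact (hC s hs).1 a h0
  exact ⟨⟨q.L, q.ψ, isLeftQuotRing_of_isArtinianRing hinj fun l ↦
    let ⟨s, hs, a, e⟩ := hq.denom l; ⟨s, a, hq.isUnit s hs, e⟩⟩, hart⟩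

end GradedToQuot

section FactorRing

variable {R : Type u} [Ring R] {d : GradedModel R}

theorem FactorModel.exists_injective_lift {A : Type*} {L : Type*} [Ring A] [Ring L] {T : Set A}
    (f : FactorModel T) {ψ : A →+* L} (hψ : ∀ a, ψ a = 0 ↔ a ∈ T) :
    ∃ χ : f.H →+* L, Injective χ ∧ ∀ a, χ (f.ρ a) = ψ a := by
  have hχ : ∀ a, f.ρ.liftOfSurjective f.surj
      ⟨ψ, fun a ha ↦ (hψ a).2 ((f.ker a).1 ha)⟩ (f.ρ a) = ψ a :=
    fun a ↦ RingHom.liftOfRightInverse_comp_apply _ _ _ _ a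
  refine ⟨_, (injective_iff_map_eq_zero _).2 fun b hb ↦ ?_, hχ⟩
  obtain ⟨a, rfl⟩ := f.surj b
  rw [hχ, hψ] at hb
  exact (f.ker a).2 hb

/-- The factor ring `gr R/τ` embeds in the localization of `gr R`, and the localization is its
left quotient ring as soon as it is left Artinian. -/
theorem FactorModel.exists_isLeftQuotRing (f : FactorModel (gradedTorsionSet d))
    (m : OreLocModel (gradedRegSet d)) [IsArtinianRing m.L] :
    ∃ χ : f.H →+* m.L, IsLeftQuotRing χ := by
  obtain ⟨χ, hinj, hχ⟩ := f.exists_injective_lift m.ker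
  refine ⟨χ, isLeftQuotRing_of_isArtinianRing hinj fun l ↦ ?_⟩
  obtain ⟨s, a, hs, e⟩ := m.denom l
  exact ⟨f.ρ s, f.ρ a, by rw [hχ]; exact m.isUnit s hs, by rw [hχ, hχ, e]⟩

theorem nonempty_factorModel (m : OreLocModel (gradedRegSet d)) :
    Nonempty (FactorModel (gradedTorsionSet d)) :=
  ⟨⟨m.ψ.range, m.ψ.rangeRestrict, m.ψ.rangeRestrict_surjective, fun a ↦
    Subtype.ext_iff.trans (m.ker a)⟩⟩

/-- The elements of positive degree in a factor ring of `gr R` lie in its prime radical. -/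
theorem map_emb_mem_primeRadical {H : Type*} [Ring H] {ρ : d.G →+* H} (hρ : Surjective ρ)
    (hn : IsNilpotentIdeal (primeRadical R)) {i : ℕ} (hi : 1 ≤ i) {x : R}
    (hx : x ∈ primeRadical R ^ i) : ρ (d.emb i x) ∈ primeRadical H := by
  obtain ⟨k, hk⟩ := hn
  refine Ideal.mem_sInf.2 fun {P} hP ↦ ?_
  have claim : ∀ m i, 1 ≤ i → k + 1 ≤ i + m → ∀ x ∈ primeRadical R ^ i,
      ρ (d.emb i x) ∈ P := by
    intro m
    induction m with
    | zero =>
      intro i _ hi x hx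
      have := Ideal.pow_le_pow_right hi hx
      rw [hk, Submodule.mem_bot] at this
      rw [this, GradedModel.emb_zero, map_zero]
      exact zero_mem _
    | succ m ih =>
      intro i h1 hi x hx
      refine (hP.2.2 _ _ fun b ↦ ?_).elim id id
      obtain ⟨g, rfl⟩ := hρ b
      obtain ⟨N, y, hy, rfl⟩ := d.gen g
      rw [map_sum, Finset.mul_sum, Finset.sum_mul]
      refine sum_mem fun j _ ↦ ?_
      rw [← map_mul, d.mul i j _ _ hx (hy j), ← map_mul,
        d.mul _ i _ _ (mul_mem_primeRadical_pow hx (hy j)) hx]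
      exact ih _ (by lia) (by lia) _
        (mul_mem_primeRadical_pow (mul_mem_primeRadical_pow hx (hy j)) hx)
  exact claim (k + 1) i hi (by lia) x hx

theorem map_mem_primeRadical_of_rep {H : Type*} [Ring H] {ρ : d.G →+* H} (hρ : Surjective ρ)
    (hn : IsNilpotentIdeal (primeRadical R)) {g : d.G} {x : ℕ → R} (hx : d.Rep g x)
    (h0 : x 0 ∈ primeRadical R) : ρ g ∈ primeRadical H := by
  obtain ⟨M, hM⟩ := hx.2.exists
  rw [hM, map_sum]
  refine sum_mem fun i _ ↦ ?_
  rcases Nat.eq_zero_or_pos i with rfl | hi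
  · rw [(d.zero_iff 0 _ (hx.1 0)).2 (by rwa [zero_add, Submodule.pow_one]), map_zero]
    exact zero_mem _
  · exact map_emb_mem_primeRadical hρ hn hi (hx.1 i)

/-- The projection of `gr R` onto the factor of `R` by a prime ideal. -/
theorem GradedModel.exists_hom_quotient (d : GradedModel R) (P : Ideal R) [P.IsTwoSided]
    (hP : primeRadical R ≤ P) : ∃ Θ : d.G →+* R ⧸ P, ∀ {g x}, d.Rep g x →
      Θ g = Ideal.Quotient.mk P (x 0) := by
  have hmem : ∀ i, i ≠ 0 → primeRadical R ^ i ≤ P := fun i hi ↦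
    (Ideal.pow_le_self hi).trans hP
  obtain ⟨Θ, hΘ⟩ := d.exists_hom
    (fun i x ↦ if i = 0 then Ideal.Quotient.mk P x else 0)
    (fun i x _ y _ ↦ by split_ifs <;> simp)
    (fun i x hx ↦ by
      split_ifs
      · exact Ideal.Quotient.eq_zero_iff_mem.2 (hmem _ i.succ_ne_zero hx)
      · rfl)
    (fun i j x _ y _ ↦ by
      rcases eq_or_ne i 0 with rfl | hi
      · rcases eq_or_ne j 0 with rfl | hj
        · simp
        · simp [hj]
      · simp [hi])
    (by simp)
  refine ⟨Θ, fun {g x} hx ↦ ?_⟩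
  obtain ⟨M, h1, hM⟩ := (hx.2.and (Filter.eventually_gt_atTop 0)).exists
  rw [h1, map_sum, Finset.sum_eq_single_of_mem 0 (Finset.mem_range.2 hM) fun i _ hi ↦ by
    rw [hΘ i _ (hx.1 i), if_neg hi], hΘ 0 _ (hx.1 0), if_pos rfl]

theorem mem_primeRadical_of_map_mem (f : FactorModel (gradedTorsionSet d)) {g : d.G} {x : ℕ → R}
    (hx : d.Rep g x) (h : f.ρ g ∈ primeRadical f.H) : x 0 ∈ primeRadical R := by
  refine Ideal.mem_sInf.2 fun {P} hP ↦ ?_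
  have hle : primeRadical R ≤ P := sInf_le hP
  have : P.IsTwoSided := ⟨fun b ha ↦ hP.2.1 _ ha b⟩
  obtain ⟨Θ, hΘ⟩ := d.exists_hom_quotient P hle
  have hker : ∀ a, f.ρ a = 0 → Θ a = 0 := by
    intro a ha
    obtain ⟨_, ⟨c, hc, rfl⟩, e⟩ := (f.ker a).1 ha
    obtain ⟨y, hy⟩ := GradedModel.exists_rep a
    have := (hy.emb_mul c).eq_zero_iff.1 e 0
    rw [zero_add, Submodule.pow_one] at this
    rw [hΘ hy, Ideal.Quotient.eq_zero_iff_mem]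
    exact hle (hc.1 _ this)
  let δ : f.H →+* R ⧸ P := f.ρ.liftOfSurjective f.surj ⟨Θ, hker⟩
  have hδ : ∀ a, δ (f.ρ a) = Θ a := fun a ↦ RingHom.liftOfRightInverse_comp_apply _ _ _ _ a
  have hprime : (RingHom.ker δ).IsPrimeNC := by
    refine ⟨fun htop ↦ ?_, fun a ha r ↦ ?_, fun a b hab ↦ ?_⟩
    · have : δ 1 = 0 := by
        rw [← RingHom.mem_ker, htop]
        trivial
      rw [map_one, ← map_one (Ideal.Quotient.mk P), Ideal.Quotient.eq_zero_iff_mem] at this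
      exact hP.1 ((Ideal.eq_top_iff_one P).2 this)
    · rw [RingHom.mem_ker] at ha ⊢
      rw [map_mul, ha, zero_mul]
    · obtain ⟨a, rfl⟩ := f.surj a
      obtain ⟨b, rfl⟩ := f.surj b
      obtain ⟨y, hy⟩ := GradedModel.exists_rep a
      obtain ⟨z, hz⟩ := GradedModel.exists_rep b
      simp only [RingHom.mem_ker, hδ, hΘ hy, hΘ hz, Ideal.Quotient.eq_zero_iff_mem]
      refine hP.2.2 _ _ fun r ↦ ?_
      have := hab (f.ρ (d.emb 0 r))
      rwa [← map_mul, ← map_mul, RingHom.mem_ker, hδ, map_mul, hΘ (hy.mul_emb r), hΘ hz,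
        ← map_mul, Ideal.Quotient.eq_zero_iff_mem] at this
  have := Ideal.mem_sInf.1 h hprime
  rwa [RingHom.mem_ker, hδ, hΘ hx, Ideal.Quotient.eq_zero_iff_mem] at this

theorem map_mem_primeRadical_iff (f : FactorModel (gradedTorsionSet d))
    (hn : IsNilpotentIdeal (primeRadical R)) {g : d.G} {x : ℕ → R} (hx : d.Rep g x) :
    f.ρ g ∈ primeRadical f.H ↔ x 0 ∈ primeRadical R :=
  ⟨mem_primeRadical_of_map_mem f hx, map_mem_primeRadical_of_rep f.surj hn hx⟩

/-- If a factor ring element is regular modulo the prime radical, then so is its component of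
degree zero. -/
theorem regModN_of_rep (f : FactorModel (gradedTorsionSet d))
    (hn : IsNilpotentIdeal (primeRadical R)) {g : d.G} {x : ℕ → R} (hx : d.Rep g x)
    (h : RegModN (f.ρ g)) : RegModN (x 0) := by
  have hy (y : R) : f.ρ (d.emb 0 y) ∈ primeRadical f.H ↔ y ∈ primeRadical R := by
    have := map_mem_primeRadical_iff f hn
      (GradedModel.rep_emb (d := d) (mem_primeRadical_pow_zero y))
    rwa [Pi.single_eq_same] at this
  refine ⟨fun y h0 ↦ (hy y).1 (h.1 _ ?_), fun y h0 ↦ (hy y).1 (h.2 _ ?_)⟩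
  · rw [← map_mul]
    exact (map_mem_primeRadical_iff f hn (hx.mul_emb y)).2 h0
  · rw [← map_mul]
    exact (map_mem_primeRadical_iff f hn (hx.emb_mul y)).2 h0

/-- The localization of `gr R` is left Artinian if the left quotient ring of `gr R/τ` is. -/
theorem isArtinianRing_of_factorModel (hd : IsLeftDenominatorSet (gradedRegSet d))
    (m : OreLocModel (gradedRegSet d)) (f : FactorModel (gradedTorsionSet d))
    (h : LeftQuotData f.H) [IsArtinianRing h.Q] (hn : IsNilpotentIdeal (primeRadical R)) :
    IsArtinianRing m.L := by
  obtain ⟨χ, hχinj, hχ⟩ := f.exists_injective_lift m.ker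
  obtain ⟨ι, hι⟩ := m.isOreLoc.exists_lift hd (χ := h.φ.comp f.ρ) fun s hs ↦
    h.quot.isUnit _ (isRegElem_of_isUnit_map hχinj (by rw [hχ]; exact m.isUnit s hs))
  simp only [RingHom.comp_apply] at hι
  have hinj : Injective ι := m.isOreLoc.injective_of_comp fun a ha ↦ by
    rw [hι, ← map_zero h.φ] at ha
    rw [← hχ, h.quot.inj ha, map_zero]
  have hsurj : Surjective ι := by
    intro q
    obtain ⟨c, b, hc, e⟩ := h.quot.denom q
    obtain ⟨g, rfl⟩ := f.surj c
    obtain ⟨b, rfl⟩ := f.surj b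
    obtain ⟨x, hx⟩ := GradedModel.exists_rep g
    have hx0 := mem_primeRadical_pow_zero (x 0)
    have hreg : RegModN (x 0) := regModN_of_rep f hn hx (h.quot.regModN_iff.2 hc)
    obtain ⟨u, hu⟩ := m.isUnit _ ⟨x 0, hreg, rfl⟩
    have hmem : ι (↑u⁻¹ * m.ψ (g - d.emb 0 (x 0))) ∈ primeRadical h.Q := by
      rw [map_mul, hι]
      refine Ideal.mul_mem_left _ _ (h.quot.map_mem_primeRadical_iff.2
        ((map_mem_primeRadical_iff f hn (hx.sub (GradedModel.rep_emb hx0))).2 ?_))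
      simp
    obtain ⟨N, hN⟩ := isNilpotent_of_mem_primeRadical hmem
    have hnil : IsNilpotent (↑u⁻¹ * m.ψ (g - d.emb 0 (x 0))) :=
      ⟨N, hinj (by rw [map_pow, hN, map_zero])⟩
    have hunit : IsUnit (m.ψ g) := by
      have := u.isUnit.mul hnil.isUnit_one_add
      rwa [mul_add, mul_one, Units.mul_inv_cancel_left, map_sub, ← hu, add_sub_cancel] at this
    obtain ⟨v, hv⟩ := hunit
    refine ⟨↑v⁻¹ * m.ψ b, (h.quot.isUnit _ hc).mul_right_injective ?_⟩
    change h.φ (f.ρ g) * _ = h.φ (f.ρ g) * q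
    rw [e, ← hι, ← hι, ← map_mul, ← hv, Units.mul_inv_cancel_left]
  let ε := RingEquiv.ofBijective ι ⟨hinj, hsurj⟩
  exact ε.symm.surjective.isArtinianRing

theorem IsLeftQuotRing.exists_oreLocModel_isArtinianRing {Q : Type u} [Ring Q]
    [IsArtinianRing Q] {φ : R →+* Q} (h : IsLeftQuotRing φ) (d : GradedModel R) :
    ∃ m : OreLocModel (gradedRegSet d), IsArtinianRing m.L := by
  obtain ⟨dQ⟩ := GradedModel.nonempty Q
  obtain ⟨ψ, hψ⟩ := h.exists_isOreLoc_gradedRegSet d dQ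
  exact ⟨⟨dQ.G, ψ, hψ.isUnit, hψ.ker, fun l ↦ let ⟨s, hs, a, e⟩ := hψ.denom l; ⟨s, a, hs, e⟩⟩,
    dQ.isArtinianRing⟩

end FactorRing

/-- **Theorem (`3Sep12`).** Let `R` be a ring, `n` its prime radical and `gr R` the
associated graded ring with respect to the `n`-adic filtration (a model `d`).  TFAE:
(1) `R` has a left Artinian left quotient ring `Q`;
(2) `C̄` is a left denominator set in `gr R`, `C̄⁻¹ gr R` is a left Artinian ring, `n` is a
nilpotent ideal, and `C' ⊆ C`;
(3) `C̄` is a left denominator set in `gr R`, the left quotient ring `Q(gr R/τ)` of `gr R/τ`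
is a left Artinian ring, `n` is a nilpotent ideal, and `C' ⊆ C`.
Moreover, if these conditions hold then `gr Q ≅ Q(gr R/τ) ≅ C̄⁻¹ gr R`, where `gr Q` is the
associated graded ring of `Q` with respect to its prime radical filtration. -/
theorem left_artinian_left_quotient_ring_criterion_associated_graded
    {R : Type u} [Ring R] (d : GradedModel R) :
    (HasArtinianLeftQuot R ↔
      (IsLeftDenominatorSet (gradedRegSet d) ∧
        (∃ m : OreLocModel (gradedRegSet d), IsArtinianRing m.L) ∧
        IsNilpotentIdeal (primeRadical R) ∧
        (∀ c : R, RegModN c → IsRegElem c))) ∧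
    (HasArtinianLeftQuot R ↔
      (IsLeftDenominatorSet (gradedRegSet d) ∧
        (∃ f : FactorModel (gradedTorsionSet d), HasArtinianLeftQuot f.H) ∧
        IsNilpotentIdeal (primeRadical R) ∧
        (∀ c : R, RegModN c → IsRegElem c))) ∧
    (HasArtinianLeftQuot R →
      ∀ e : LeftQuotData R, IsArtinianRing e.Q →
        ∀ (dQ : GradedModel e.Q) (m : OreLocModel (gradedRegSet d)),
          Nonempty (dQ.G ≃+* m.L) ∧
          ∀ (f : FactorModel (gradedTorsionSet d)) (h : LeftQuotData f.H),
            Nonempty (h.Q ≃+* m.L)) := by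
  have one_two : HasArtinianLeftQuot R → IsLeftDenominatorSet (gradedRegSet d) ∧
      (∃ m : OreLocModel (gradedRegSet d), IsArtinianRing m.L) ∧
      IsNilpotentIdeal (primeRadical R) ∧ ∀ c : R, RegModN c → IsRegElem c := by
    rintro ⟨e, he⟩
    exact ⟨e.quot.isLeftDenominatorSet_gradedRegSet d,
      e.quot.exists_oreLocModel_isArtinianRing d, e.quot.isNilpotentIdeal_primeRadical,
      fun c ↦ e.quot.regModN_iff.1⟩
  refine ⟨⟨one_two, ?_⟩, ⟨fun h ↦ ?_, ?_⟩, ?_⟩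
  · rintro ⟨hd, ⟨m, hm⟩, hn, hC⟩
    exact hasArtinianLeftQuot_of_oreLocModel hd m hn hC
  · obtain ⟨hd, ⟨m, hm⟩, hn, hC⟩ := one_two h
    obtain ⟨f⟩ := nonempty_factorModel m
    obtain ⟨χ, hχ⟩ := f.exists_isLeftQuotRing m
    exact ⟨hd, ⟨f, ⟨m.L, χ, hχ⟩, hm⟩, hn, hC⟩
  · rintro ⟨hd, ⟨f, q, hq⟩, hn, hC⟩
    obtain ⟨m⟩ := hd.nonempty_oreLocModel
    have := isArtinianRing_of_factorModel hd m f q hn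
    exact hasArtinianLeftQuot_of_oreLocModel hd m hn hC
  · intro _ e he dQ m
    have hd := e.quot.isLeftDenominatorSet_gradedRegSet d
    obtain ⟨ψ, hψ⟩ := e.quot.exists_isOreLoc_gradedRegSet d dQ
    obtain ⟨ε⟩ := hψ.nonempty_ringEquiv hd m.isOreLoc
    have := dQ.isArtinianRing
    have : IsArtinianRing m.L := ε.surjective.isArtinianRing
    refine ⟨⟨ε⟩, fun f q ↦ ?_⟩
    obtain ⟨χ, hχ⟩ := f.exists_isLeftQuotRing m
    exact q.quot.nonempty_ringEquiv hχ
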